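/- For every integer n ≥ 2 there exist T > 0 and a smooth T-periodic curve γ(t) = (x(t), y(t)) with x(t) > 0, y(t) > 0 and x'(t)² + y'(t)² = 1 for all t, such that γ restricted to [0, T) is injective, γ is a solution of the self-shrinker profile equation with m = n, and the image of γ is invariant under the reflection (x, y) ↦ (y, x). (This curve is the profile curve of a closed embedded SO(n)×SO(n)-invariant mean curvature self-shrinker in ℝ^{2n} diffeomorphic to S^{n−1}×S^{n−1}×S^1.) -/

import Mathlib

section Aux
open Real Set

namespace Shrinker

lemma exists_global {E : Type*} [NormedAddCommGroup E] [NormedSpace ℝ E] [CompleteSpace E]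
    (v : E → E) (K L : NNReal) (hl : LipschitzWith K v) (hb : ∀ x, ‖v x‖ ≤ L) (x0 : E) :
    ∃ γ : ℝ → E, γ 0 = x0 ∧ ∀ t, HasDerivAt γ (v (γ t)) t := by
  have key : ∀ n : ℕ, ∃ α : ℝ → E, α 0 = x0 ∧
      ∀ t ∈ Ioo (-((n:ℝ)+1)) ((n:ℝ)+1), HasDerivAt α (v (α t)) t := by
    intro n
    have h0 : (0:ℝ) ∈ Icc (-((n:ℝ)+1)) ((n:ℝ)+1) := by
      constructor <;> linarith [(Nat.cast_nonneg n : (0:ℝ) ≤ n)]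
    have hp : IsPicardLindelof (fun _ => v) (⟨0, h0⟩ : Icc (-((n:ℝ)+1)) ((n:ℝ)+1)) x0
        (L * (n+1)) 0 L K := by
      apply IsPicardLindelof.of_time_independent
      · intro x _; exact hb x
      · exact hl.lipschitzOnWith
      · simp
    obtain ⟨α, h1, h2⟩ := hp.exists_eq_forall_mem_Icc_hasDerivWithinAt₀
    refine ⟨α, h1, fun t ht => ?_⟩
    exact (h2 t (Ioo_subset_Icc_self ht)).hasDerivAt (Icc_mem_nhds ht.1 ht.2)
  choose α h1 h2 using key
  have hu : ∀ m n : ℕ, m ≤ n → ∀ t ∈ Ioo (-((m:ℝ)+1)) ((m:ℝ)+1), α m t = α n t := by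
    intro m n hmn
    have hmn' : (m:ℝ) ≤ n := by exact_mod_cast hmn
    have := ODE_solution_unique_of_mem_Ioo (v := fun _ => v) (s := fun _ => univ) (K := K)
      (f := α m) (g := α n) (t₀ := 0) (a := -((m:ℝ)+1)) (b := (m:ℝ)+1)
      (fun _ _ => hl.lipschitzOnWith)
      (by constructor <;> linarith [(Nat.cast_nonneg m : (0:ℝ) ≤ m)])
      (fun t ht => ⟨h2 m t ht, trivial⟩)
      (fun t ht => ⟨h2 n t ⟨by linarith [ht.1], by linarith [ht.2]⟩, trivial⟩)
      (by rw [h1, h1])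
    exact this
  refine ⟨fun t => α ⌈|t|⌉₊ t, by simp [h1], fun t => ?_⟩
  set n := ⌈|t|⌉₊ + 1 with hn
  have htn : |t| ≤ ⌈|t|⌉₊ := Nat.le_ceil _
  have hev : (fun t => α ⌈|t|⌉₊ t) =ᶠ[nhds t] α n := by
    have : Ioo (t-1) (t+1) ∈ nhds t := Ioo_mem_nhds (by linarith) (by linarith)
    filter_upwards [this] with u hu'
    have hu1 : |u| ≤ ⌈|u|⌉₊ := Nat.le_ceil _
    have hu2 : ⌈|u|⌉₊ ≤ n := by
      apply Nat.ceil_le.2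
      rw [hn]; push_cast
      have : |u| ≤ |t| + 1 := by
        rw [abs_le]; constructor <;> linarith [neg_abs_le t, le_abs_self t, hu'.1, hu'.2]
      linarith
    apply hu _ _ hu2
    constructor <;> linarith [neg_abs_le u, le_abs_self u]
  have : α ⌈|t|⌉₊ t = α n t := hev.eq_of_nhds
  refine HasDerivAt.congr_of_eventuallyEq ?_ hev
  show HasDerivAt (α n) (v (α ⌈|t|⌉₊ t)) t
  rw [this]
  apply h2
  rw [hn]; push_cast
  constructor <;> linarith [neg_abs_le t, le_abs_self t]

/-- the regularising factor -/
noncomputable def P (s : ℝ) : ℝ := 1 / (1 + exp (2 * s))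

/-- normalised radial force -/
noncomputable def hr (N : ℕ) (s : ℝ) : ℝ := 1 - exp (2 * s) / (2 * (2 * N + 1))

lemma P_pos (s : ℝ) : 0 < P s := by unfold P; positivity

lemma P_le (s : ℝ) : P s ≤ 1 := by
  unfold P; rw [div_le_one (by positivity)]; linarith [exp_pos (2*s)]

lemma P_anti {s s' : ℝ} (hs : s ≤ s') : P s' ≤ P s := by
  unfold P; gcongr

lemma P_deriv (s : ℝ) : HasDerivAt P (-(2 * exp (2*s)) / (1 + exp (2*s))^2) s := by
  have h1 : HasDerivAt (fun s : ℝ => 1 + exp (2*s)) (2 * exp (2*s)) s := by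
    have := ((hasDerivAt_id s).const_mul 2).exp.const_add 1
    simpa [mul_comm] using this
  have h2 := h1.inv (by positivity)
  have : P = fun s => (1 + exp (2*s))⁻¹ := by ext; simp [P]
  rw [this]; exact h2

lemma P_lip (x y : ℝ) : |P x - P y| ≤ |x - y| := by
  have := Convex.norm_image_sub_le_of_norm_hasDerivWithin_le (f := P)
    (f' := fun s => -(2 * exp (2*s)) / (1 + exp (2*s))^2) (C := 1) (s := univ) (x := y) (y := x)
    (fun s _ => (P_deriv s).hasDerivWithinAt) (fun s _ => by
      rw [Real.norm_eq_abs, abs_div, abs_neg, abs_of_pos (by positivity : 0 < 2 * exp (2*s)),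
        abs_of_pos (by positivity : 0 < (1 + exp (2*s))^2), div_le_one (by positivity)]
      nlinarith [sq_nonneg (exp (2*s))]) convex_univ trivial trivial
  simpa using this

lemma tri (p q r p' q' r' : ℝ) (hq : |q| ≤ 1) (hr : |r| ≤ 1)
    (hp' : |p'| ≤ 1) (hq' : |q'| ≤ 1) :
    |p*q*r - p'*q'*r'| ≤ |p-p'| + |q-q'| + |r-r'| := by
  have e : p*q*r - p'*q'*r' = (p-p')*q*r + p'*(q-q')*r + p'*q'*(r-r') := by ring
  rw [e]
  refine (abs_add_three _ _ _).trans ?_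
  simp only [abs_mul]
  have a1 : |p-p'| * |q| * |r| ≤ |p-p'| * 1 * 1 := by gcongr
  have a2 : |p'| * |q-q'| * |r| ≤ 1 * |q-q'| * 1 := by gcongr
  have a3 : |p'| * |q'| * |r-r'| ≤ 1 * 1 * |r-r'| := by gcongr
  linarith

/-- the regularised vector field -/
noncomputable def V (N : ℕ) (z : ℝ × ℝ × ℝ) : ℝ × ℝ × ℝ :=
  (-(P z.1 * cos (2 * z.2.1) * cos z.2.2),
   -(P z.1 * cos (2 * z.2.1) * sin z.2.2),
   (2 * N + 1) * (hr N z.1 * P z.1) * (cos (2 * z.2.1) * sin z.2.2)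
     + 2 * N * (P z.1 * sin (2 * z.2.1) * cos z.2.2))

lemma hP (N : ℕ) (s : ℝ) : (2 * N + 1) * (hr N s * P s) = (2*N+3/2) * P s - 1/2 := by
  unfold hr P
  have := exp_pos (2*s)
  field_simp
  ring

lemma V_bound (N : ℕ) (z) : ‖V N z‖ ≤ (4*N+3 : NNReal) := by
  have hN : (0:ℝ) ≤ N := Nat.cast_nonneg N
  have hP0 := P_pos z.1
  have hP1 := P_le z.1
  have hPa : |P z.1| ≤ 1 := by rw [abs_of_pos hP0]; exact hP1
  have t1 : ∀ a b : ℝ, |a| ≤ 1 → |b| ≤ 1 → |P z.1 * a * b| ≤ 1 := by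
    intro a b ha hb
    rw [abs_mul, abs_mul]
    have : |P z.1| * |a| * |b| ≤ 1 * 1 * 1 := by gcongr
    linarith
  have b1 := t1 _ _ (abs_cos_le_one (2 * z.2.1)) (abs_cos_le_one z.2.2)
  have b2 := t1 _ _ (abs_cos_le_one (2 * z.2.1)) (abs_sin_le_one z.2.2)
  have b3 := t1 _ _ (abs_sin_le_one (2 * z.2.1)) (abs_cos_le_one z.2.2)
  have b4 : |cos (2 * z.2.1) * sin z.2.2| ≤ 1 := by
    rw [abs_mul]
    have : |cos (2 * z.2.1)| * |sin z.2.2| ≤ 1 * 1 := by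
      gcongr
      · exact abs_cos_le_one _
      · exact abs_sin_le_one _
    linarith
  unfold V
  rw [Prod.norm_mk, Prod.norm_mk]
  push_cast
  simp only [norm_neg, Real.norm_eq_abs]
  refine max_le (by linarith) (max_le (by linarith) ?_)
  rw [hP]
  have e : ((2*N+3/2) * P z.1 - 1/2) * (cos (2 * z.2.1) * sin z.2.2) + 2 * N * (P z.1 * sin (2 * z.2.1) * cos z.2.2) = (2*N+3/2) * (P z.1 * cos (2 * z.2.1) * sin z.2.2) - 1/2 * (cos (2 * z.2.1) * sin z.2.2) + 2 * N * (P z.1 * sin (2 * z.2.1) * cos z.2.2) := by ring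
  rw [e]
  rw [abs_le] at *
  constructor <;> nlinarith

lemma V_lip (N : ℕ) : LipschitzWith (20*N+20) (V N) := by
  apply LipschitzWith.of_dist_le_mul
  intro z w
  have hN : (0:ℝ) ≤ N := Nat.cast_nonneg N
  set D := dist z w with hD
  have d1 : |z.1 - w.1| ≤ D := by
    rw [hD, Prod.dist_eq, ← Real.dist_eq]; exact le_max_left _ _
  have d23 : dist z.2 w.2 ≤ D := by
    rw [hD, Prod.dist_eq]; exact le_max_right _ _
  have d2 : |z.2.1 - w.2.1| ≤ D := by
    refine le_trans ?_ d23
    rw [Prod.dist_eq, ← Real.dist_eq]; exact le_max_left _ _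
  have d3 : |z.2.2 - w.2.2| ≤ D := by
    refine le_trans ?_ d23
    rw [Prod.dist_eq, ← Real.dist_eq]; exact le_max_right _ _
  have e1 : |P z.1 - P w.1| ≤ D := (P_lip _ _).trans d1
  have lc : ∀ x y : ℝ, |cos x - cos y| ≤ |x - y| := fun x y => by
    have := Real.lipschitzWith_cos.dist_le_mul x y; simpa [Real.dist_eq] using this
  have ls : ∀ x y : ℝ, |sin x - sin y| ≤ |x - y| := fun x y => by
    have := Real.lipschitzWith_sin.dist_le_mul x y; simpa [Real.dist_eq] using this
  have d2' : |2 * z.2.1 - 2 * w.2.1| ≤ 2 * D := by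
    rw [← mul_sub, abs_mul]; simp; exact d2
  have e2 := (lc (2*z.2.1) (2*w.2.1)).trans d2'
  have e3 := (ls (2*z.2.1) (2*w.2.1)).trans d2'
  have e4 := (lc z.2.2 w.2.2).trans d3
  have e5 := (ls z.2.2 w.2.2).trans d3
  have aP : ∀ s, |P s| ≤ 1 := fun s => by rw [abs_of_pos (P_pos s)]; exact P_le s
  have f1 := tri (P z.1) (cos (2 * z.2.1)) (cos z.2.2) (P w.1) (cos (2 * w.2.1)) (cos w.2.2)
    (abs_cos_le_one _) (abs_cos_le_one _) (aP _) (abs_cos_le_one _)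
  have f2 := tri (P z.1) (cos (2 * z.2.1)) (sin z.2.2) (P w.1) (cos (2 * w.2.1)) (sin w.2.2)
    (abs_cos_le_one _) (abs_sin_le_one _) (aP _) (abs_cos_le_one _)
  have f3 := tri (P z.1) (sin (2 * z.2.1)) (cos z.2.2) (P w.1) (sin (2 * w.2.1)) (cos w.2.2)
    (abs_sin_le_one _) (abs_cos_le_one _) (aP _) (abs_sin_le_one _)
  have f4 := tri 1 (cos (2 * z.2.1)) (sin z.2.2) 1 (cos (2 * w.2.1)) (sin w.2.2)
    (abs_cos_le_one _) (abs_sin_le_one _) (by simp) (abs_cos_le_one _)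
  simp only [sub_self, abs_zero, one_mul, zero_add] at f4
  have hD0 : 0 ≤ D := dist_nonneg
  unfold V
  rw [Prod.dist_eq, Prod.dist_eq]
  push_cast
  simp only [Real.dist_eq]
  have hND : 0 ≤ N * D := by positivity
  refine max_le ?_ (max_le ?_ ?_)
  · rw [neg_sub_neg, abs_sub_comm]; nlinarith
  · rw [neg_sub_neg, abs_sub_comm]; nlinarith
  · rw [hP, hP]
    have g2 := f2.trans (by linarith : _ ≤ 4 * D)
    have g3 := f3.trans (by linarith : _ ≤ 4 * D)
    have g4 := f4.trans (by linarith : _ ≤ 3 * D)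
    rw [abs_le] at g2 g3 g4 ⊢
    constructor <;> nlinarith [mul_le_mul_of_nonneg_left g2.1 hN, mul_le_mul_of_nonneg_left g2.2 hN, mul_le_mul_of_nonneg_left g3.1 hN, mul_le_mul_of_nonneg_left g3.2 hN]

end Shrinker

open Real Set

namespace Shrinker

lemma mono_of {f f' : ℝ → ℝ} (hf : ∀ t, HasDerivAt f (f' t) t) {a b : ℝ} (hab : a ≤ b)
    (hd : ∀ t ∈ Ioo a b, 0 ≤ f' t) : f a ≤ f b := by
  have := monotoneOn_of_deriv_nonneg (convex_Icc a b)
    (fun t _ => (hf t).continuousAt.continuousWithinAt)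
    (fun t _ => (hf t).differentiableAt.differentiableWithinAt)
    (fun t ht => by rw [interior_Icc] at ht; rw [(hf t).deriv]; exact hd t ht)
  exact this (left_mem_Icc.2 hab) (right_mem_Icc.2 hab) hab

lemma smono_of {f f' : ℝ → ℝ} (hf : ∀ t, HasDerivAt f (f' t) t) {a b : ℝ} (hab : a < b)
    (hd : ∀ t ∈ Ioo a b, 0 < f' t) : f a < f b := by
  have := strictMonoOn_of_deriv_pos (convex_Icc a b)
    (fun t _ => (hf t).continuousAt.continuousWithinAt)
    (fun t ht => by rw [interior_Icc] at ht; rw [(hf t).deriv]; exact hd t ht)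
  exact this (left_mem_Icc.2 hab.le) (right_mem_Icc.2 hab.le) hab

/-- first time in a closed set -/
lemma first_time {Z : Set ℝ} (hZ : IsClosed Z) {a b : ℝ} (hab : a ≤ b) (hb : b ∈ Z) :
    ∃ t ∈ Icc a b, t ∈ Z ∧ ∀ u ∈ Ico a t, u ∉ Z := by
  have hc : IsCompact (Icc a b ∩ Z) := isCompact_Icc.inter_right hZ
  obtain ⟨t, ht⟩ := hc.exists_isLeast ⟨b, ⟨hab, le_rfl⟩, hb⟩
  refine ⟨t, ht.1.1, ht.1.2, fun u hu hZu => ?_⟩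
  have := ht.2 ⟨⟨hu.1, hu.2.le.trans ht.1.1.2⟩, hZu⟩
  exact absurd this (not_le.2 hu.2)

lemma barrier {f : ℝ → ℝ} (hf : Continuous f) {a b : ℝ} (ha : 0 < f a)
    (hstep : ∀ t ∈ Ioc a b, (∀ u ∈ Ico a t, 0 < f u) → 0 < f t) : ∀ t ∈ Icc a b, 0 < f t := by
  intro t ht
  by_contra hn
  obtain ⟨u, hu, hu1, hu2⟩ := first_time (Z := {x | f x ≤ 0})
    (isClosed_le hf continuous_const) ht.1 (not_lt.1 hn)
  have hau : a < u := lt_of_le_of_ne hu.1 (by rintro rfl; exact absurd ha (not_lt.2 hu1))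
  exact absurd (hstep u ⟨hau, hu.2.trans ht.2⟩ (fun v hv => not_le.1 (hu2 v hv))) (not_lt.2 hu1)

lemma pos_right {f : ℝ → ℝ} {f' a : ℝ} (hf : HasDerivAt f f' a) (h0 : f a = 0) (hp : 0 < f') :
    ∃ ε > 0, ∀ t ∈ Ioo a (a + ε), 0 < f t := by
  have h1 := hasDerivAt_iff_tendsto_slope.1 hf
  have h2 := h1.eventually (lt_mem_nhds hp)
  rw [eventually_nhdsWithin_iff, Metric.eventually_nhds_iff] at h2
  obtain ⟨ε, hε, h3⟩ := h2
  refine ⟨ε, hε, fun t ht => ?_⟩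
  have h4 := h3 (y := t) (by rw [Real.dist_eq, abs_lt]; constructor <;> linarith [ht.1, ht.2])
    (by simp; exact ht.1.ne')
  rw [slope_def_field, h0, sub_zero] at h4
  have : 0 < t - a := by linarith [ht.1]
  have h5 := mul_pos h4 this
  rwa [div_mul_cancel₀ _ this.ne'] at h5

/-- solution of the shooting problem -/
structure Sol (N : ℕ) (s1 : ℝ) (s η χ : ℝ → ℝ) : Prop where
  hN : 1 ≤ N
  hs1 : hr N s1 < 0
  ds : ∀ t, HasDerivAt s (-(P (s t) * cos (2 * η t) * cos (χ t))) t
  de : ∀ t, HasDerivAt η (-(P (s t) * cos (2 * η t) * sin (χ t))) t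
  dc : ∀ t, HasDerivAt χ ((2 * N + 1) * (hr N (s t) * P (s t)) * (cos (2 * η t) * sin (χ t))
     + 2 * N * (P (s t) * sin (2 * η t) * cos (χ t))) t
  s0 : s 0 = s1
  e0 : η 0 = 0
  c0 : χ 0 = -(π / 2)

noncomputable def A (N : ℕ) (s : ℝ) : ℝ := exp ((2 * N + 1) * s - exp (2 * s) / 4)
noncomputable def Mf (N : ℕ) (s χ : ℝ → ℝ) (t : ℝ) : ℝ := A N (s t) * sin (χ t)
noncomputable def Kf (N : ℕ) (η χ : ℝ → ℝ) (t : ℝ) : ℝ := cos (2 * η t) ^ N * cos (χ t)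
noncomputable def Gf (N : ℕ) (s η χ : ℝ → ℝ) (t : ℝ) : ℝ :=
  cos (χ t) * sin (2 * η t) + sin (χ t) * hr N (s t) * cos (2 * η t)
noncomputable def Yf (N : ℕ) (s η χ : ℝ → ℝ) (t : ℝ) : ℝ := cos (2 * η t) ^ N * Gf N s η χ t

lemma A_pos (N s) : 0 < A N s := exp_pos _

lemma hr_deriv (N : ℕ) (s : ℝ) : HasDerivAt (hr N) (-(2 * (1 - hr N s))) s := by
  have h1 := ((((hasDerivAt_id s).const_mul 2).exp).div_const (2 * (2 * (N:ℝ) + 1))).const_sub 1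
  have e : -(2 * (1 - hr N s)) = -(exp (2 * id s) * (2 * 1) / (2 * (2 * (N:ℝ) + 1))) := by
    unfold hr; simp; ring
  rw [e]; exact h1

lemma hr_lt_one (N : ℕ) (s : ℝ) : hr N s < 1 := by
  unfold hr
  have : 0 < exp (2 * s) / (2 * (2 * (N:ℝ) + 1)) := by positivity
  linarith

lemma hr_anti (N : ℕ) {s s' : ℝ} (hs : s ≤ s') : hr N s' ≤ hr N s := by
  unfold hr; gcongr

lemma hr_santi (N : ℕ) {s s' : ℝ} (hs : s < s') : hr N s' < hr N s := by
  unfold hr; gcongr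

lemma A_deriv (N : ℕ) (s : ℝ) : HasDerivAt (A N) ((2 * N + 1) * hr N s * A N s) s := by
  have h1 := (((hasDerivAt_id s).const_mul (2 * (N:ℝ) + 1)).sub
    ((((hasDerivAt_id s).const_mul 2).exp).div_const 4)).exp
  have h2 : HasDerivAt (A N) _ s := h1
  convert h2 using 1
  unfold A hr; simp
  have : (2 * (N:ℝ) + 1) ≠ 0 := by positivity
  field_simp
  ring_nf

namespace Sol
variable {N : ℕ} {s1 : ℝ} {s η χ : ℝ → ℝ} (S : Sol N s1 s η χ)
include S

lemma cs : Continuous s := continuous_iff_continuousAt.2 fun t => (S.ds t).continuousAt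
lemma ce : Continuous η := continuous_iff_continuousAt.2 fun t => (S.de t).continuousAt
lemma cc : Continuous χ := continuous_iff_continuousAt.2 fun t => (S.dc t).continuousAt

lemma dcos (t : ℝ) : HasDerivAt (fun t => cos (2 * η t))
    (2 * sin (2 * η t) * P (s t) * sin (χ t) * cos (2 * η t)) t := by
  have := ((S.de t).const_mul 2).cos
  exact this.congr_deriv (by ring)

lemma dsin (t : ℝ) : HasDerivAt (fun t => sin (2 * η t))
    (-(2 * P (s t) * sin (χ t) * cos (2 * η t) ^ 2)) t := by
  have := ((S.de t).const_mul 2).sin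
  exact this.congr_deriv (by ring)

lemma dA (t : ℝ) : HasDerivAt (fun t => A N (s t))
    (-((2 * N + 1) * hr N (s t) * A N (s t) * P (s t) * cos (2 * η t) * cos (χ t))) t := by
  have := (A_deriv N (s t)).comp t (S.ds t)
  exact this.congr_deriv (by ring)

lemma dh (t : ℝ) : HasDerivAt (fun t => hr N (s t))
    (2 * (1 - hr N (s t)) * P (s t) * cos (2 * η t) * cos (χ t)) t := by
  have := (hr_deriv N (s t)).comp t (S.ds t)
  exact this.congr_deriv (by ring)

lemma dM (t : ℝ) : HasDerivAt (Mf N s χ)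
    (2 * N * P (s t) * A N (s t) * sin (2 * η t) * cos (χ t) ^ 2) t := by
  have := (S.dA t).mul (S.dc t).sin
  exact this.congr_deriv (by ring)

lemma dpow (t : ℝ) : HasDerivAt (fun t => cos (2 * η t) ^ N)
    (2 * N * sin (2 * η t) * P (s t) * sin (χ t) * cos (2 * η t) ^ N) t := by
  have := (S.dcos t).pow N
  obtain ⟨k, hk⟩ : ∃ k, N = k + 1 := ⟨N - 1, by have := S.hN; omega⟩
  refine this.congr_deriv ?_
  subst hk; simp; ring

lemma dK (t : ℝ) : HasDerivAt (Kf N η χ)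
    (-((2 * N + 1) * hr N (s t) * P (s t) * cos (2 * η t) * cos (2 * η t) ^ N * sin (χ t) ^ 2)) t := by
  have := (S.dpow t).mul (S.dc t).cos
  exact this.congr_deriv (by ring)

lemma dY (t : ℝ) : HasDerivAt (Yf N s η χ)
    (P (s t) * cos (2 * η t) * hr N (s t) * (2 * N * cos (χ t) * Yf N s η χ t +
      cos (2 * η t) ^ N * (sin (χ t) ^ 2 * sin (2 * η t)
        - sin (χ t) * cos (χ t) * cos (2 * η t) * (2 - hr N (s t))))) t := by
  have h1 := ((S.dc t).cos.mul (S.dsin t)).add (((S.dc t).sin.mul (S.dh t)).mul (S.dcos t))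
  have := (S.dpow t).mul h1
  refine this.congr_deriv ?_
  simp only [Yf, Gf, Pi.mul_apply, Pi.add_apply]; ring

lemma C_pos (t : ℝ) : 0 < cos (2 * η t) := by
  set g : ℝ → ℝ := fun t => 2 * sin (2 * η t) * P (s t) * sin (χ t) with hg
  have hPc : Continuous P := continuous_iff_continuousAt.2 fun t => (P_deriv t).continuousAt
  have hgc : Continuous g := by
    have := S.cs; have := S.ce; have := S.cc
    fun_prop
  have hI : ∀ t, HasDerivAt (fun u => ∫ x in (0:ℝ)..u, g x) (g t) t := fun t =>
    intervalIntegral.integral_hasDerivAt_right (hgc.intervalIntegrable _ _)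
      (hgc.stronglyMeasurableAtFilter _ _) hgc.continuousAt
  have hz : ∀ t, HasDerivAt (fun u => cos (2 * η u) * exp (-∫ x in (0:ℝ)..u, g x)) 0 t := by
    intro t
    have := (S.dcos t).mul ((hI t).neg.exp)
    refine this.congr_deriv ?_; simp only [hg]; ring
  have hcst := is_const_of_deriv_eq_zero (fun t => (hz t).differentiableAt)
    (fun t => (hz t).deriv) t 0
  simp only [S.e0] at hcst
  simp at hcst
  have hp := exp_pos (-∫ x in (0:ℝ)..t, g x)
  by_contra hn
  have := mul_nonpos_of_nonpos_of_nonneg (not_lt.1 hn) hp.le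
  rw [hcst] at this
  linarith

lemma C_le (t : ℝ) : cos (2 * η t) ≤ 1 := cos_le_one _

lemma e_lt (t : ℝ) : |η t| < π / 4 := by
  by_contra hn
  push Not at hn
  have hc : Continuous fun u => |η u| := S.ce.abs
  have h1 : π / 4 ∈ uIcc (|η 0|) (|η t|) := by
    rw [S.e0, abs_zero, uIcc_of_le (abs_nonneg _)]; exact ⟨by positivity, hn⟩
  obtain ⟨u, -, hu⟩ := intermediate_value_uIcc (a := 0) (b := t) hc.continuousOn h1
  have h2 := S.C_pos u
  have : cos (2 * η u) = 0 := by
    rw [← cos_abs, abs_mul]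
    have hu' : |η u| = π / 4 := hu
    rw [hu', abs_two, show 2 * (π/4) = π/2 by ring, cos_pi_div_two]
  linarith

lemma S_pos {t : ℝ} (ht : 0 < η t) : 0 < sin (2 * η t) := by
  have := (abs_lt.1 (S.e_lt t)).2
  apply sin_pos_of_pos_of_lt_pi <;> linarith [pi_pos]

lemma CN_pos (t : ℝ) : 0 < cos (2 * η t) ^ N := pow_pos (S.C_pos t) N
lemma CN_le (t : ℝ) : cos (2 * η t) ^ N ≤ 1 := pow_le_one₀ (S.C_pos t).le (S.C_le t)
lemma CN_le_C (t : ℝ) : cos (2 * η t) ^ N ≤ cos (2 * η t) := by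
  have := pow_le_pow_of_le_one (S.C_pos t).le (S.C_le t) S.hN
  simpa using this

lemma K0 : Kf N η χ 0 = 0 := by simp [Kf, S.c0]

lemma start : ∃ ε > 0, ∀ t ∈ Ioo 0 ε, 0 < η t ∧ χ t < π / 2 ∧ -(π/2) < χ t := by
  have h1 := S.de 0
  have h2 := S.dc 0
  rw [S.s0, S.e0, S.c0] at h1 h2
  simp at h1 h2
  obtain ⟨ε1, he1, k1⟩ := pos_right h1 S.e0 (P_pos _)
  obtain ⟨ε2, he2, k2⟩ := pos_right (f := fun t => χ t + π/2) (h2.add_const _) (by rw [S.c0]; ring)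
    (by
      have a := mul_pos_of_neg_of_neg S.hs1 (neg_neg_of_pos (P_pos s1))
      have : (0:ℝ) < 2 * N + 1 := by positivity
      nlinarith [mul_pos this a])
  have hcont : ∀ᶠ t in nhds 0, χ t < π / 2 := by
    apply (S.cc.tendsto 0).eventually (gt_mem_nhds _)
    rw [S.c0]; linarith [pi_pos]
  obtain ⟨ε3, he3, k3⟩ := Metric.eventually_nhds_iff.1 hcont
  refine ⟨min ε1 (min ε2 ε3), by positivity, fun t ht => ?_⟩
  have l1 := lt_of_lt_of_le ht.2 (min_le_left _ _)
  have l2 := lt_of_lt_of_le ht.2 ((min_le_right _ _).trans (min_le_left _ _))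
  have l3 := lt_of_lt_of_le ht.2 ((min_le_right _ _).trans (min_le_right _ _))
  refine ⟨k1 t ⟨ht.1, by linarith⟩, k3 (by rw [Real.dist_eq, sub_zero, abs_of_pos ht.1]; exact l3), ?_⟩
  have := k2 t ⟨ht.1, by linarith⟩
  linarith

end Sol
end Shrinker

open Real Set

namespace Shrinker

lemma left_ge {f : ℝ → ℝ} (hf : Continuous f) {a b c : ℝ} (hab : a < b)
    (h : ∀ u ∈ Ioo a b, c ≤ f u) : c ≤ f b := by
  have h1 : closure (Ioo a b) ⊆ {x | c ≤ f x} :=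
    closure_minimal h (isClosed_le continuous_const hf)
  rw [closure_Ioo hab.ne] at h1
  exact h1 (right_mem_Icc.2 hab.le)

lemma left_le {f : ℝ → ℝ} (hf : Continuous f) {a b c : ℝ} (hab : a < b)
    (h : ∀ u ∈ Ioo a b, f u ≤ c) : f b ≤ c := by
  have := left_ge (f := fun x => - f x) hf.neg (c := -c) hab (fun u hu => neg_le_neg (h u hu))
  linarith

lemma first_hit {f : ℝ → ℝ} (hf : Continuous f) {a b c : ℝ} (hab : a ≤ b) (ha : c < f a)
    (hb : f b ≤ c) : ∃ t ∈ Ioc a b, f t = c ∧ ∀ u ∈ Ico a t, c < f u := by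
  obtain ⟨t, ht, h1, h2⟩ := first_time (Z := {x | f x ≤ c}) (isClosed_le hf continuous_const) hab hb
  have h1' : f t ≤ c := h1
  have hat : a < t := lt_of_le_of_ne ht.1 (by rintro rfl; linarith)
  refine ⟨t, ⟨hat, ht.2⟩, le_antisymm h1' ?_, fun u hu => not_le.1 (h2 u hu)⟩
  exact left_ge hf hat (fun u hu => (not_le.1 (h2 u ⟨hu.1.le, hu.2⟩)).le)

lemma first_hit' {f : ℝ → ℝ} (hf : Continuous f) {a b c : ℝ} (hab : a ≤ b) (ha : f a < c)
    (hb : c ≤ f b) : ∃ t ∈ Ioc a b, f t = c ∧ ∀ u ∈ Ico a t, f u < c := by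
  obtain ⟨t, ht, h1, h2⟩ := first_hit (f := fun x => - f x) hf.neg (c := -c) hab
    (neg_lt_neg ha) (neg_le_neg hb)
  exact ⟨t, ht, by linarith, fun u hu => by have := h2 u hu; linarith⟩

/-- no event before T -/
def Good (η χ : ℝ → ℝ) (T : ℝ) : Prop := ∀ t ∈ Ioo 0 T, 0 < η t ∧ χ t < π / 2

lemma A_le (N : ℕ) {s s1 : ℝ} (hs : s ≤ s1) : A N s ≤ exp ((2 * N + 1) * s1) := by
  unfold A
  apply exp_le_exp.2
  have : 0 < exp (2 * s) := exp_pos _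
  have : (2 * (N:ℝ) + 1) * s ≤ (2 * N + 1) * s1 := by gcongr
  linarith

namespace Sol
variable {N : ℕ} {s1 : ℝ} {s η χ : ℝ → ℝ} (S : Sol N s1 s η χ)
include S

lemma s_anti {a b : ℝ} (hab : a ≤ b) (h : ∀ t ∈ Ioo a b, 0 ≤ cos (χ t)) : s b ≤ s a := by
  have := mono_of (fun t => (S.ds t).neg) hab (fun t ht => by
    rw [neg_neg]; have := P_pos (s t); have := S.C_pos t; have := h t ht; positivity)
  simp at this; exact this

lemma s_santi {a b : ℝ} (hab : a < b) (h : ∀ t ∈ Ioo a b, 0 < cos (χ t)) : s b < s a := by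
  have := smono_of (fun t => (S.ds t).neg) hab (fun t ht => by
    rw [neg_neg]; have := P_pos (s t); have := S.C_pos t; have := h t ht; positivity)
  simp at this; exact this

lemma e_anti {a b : ℝ} (hab : a ≤ b) (h : ∀ t ∈ Ioo a b, 0 ≤ sin (χ t)) : η b ≤ η a := by
  have := mono_of (fun t => (S.de t).neg) hab (fun t ht => by
    rw [neg_neg]; have := P_pos (s t); have := S.C_pos t; have := h t ht; positivity)
  simp at this; exact this

lemma e_mono {a b : ℝ} (hab : a ≤ b) (h : ∀ t ∈ Ioo a b, sin (χ t) ≤ 0) : η a ≤ η b := by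
  refine mono_of S.de hab (fun t ht => ?_)
  rw [← mul_neg]
  have := P_pos (s t); have := S.C_pos t; have := neg_nonneg.2 (h t ht); positivity

lemma M_mono {a b : ℝ} (hab : a ≤ b) (h : ∀ t ∈ Ioo a b, 0 ≤ η t) :
    Mf N s χ a ≤ Mf N s χ b := by
  refine mono_of S.dM hab (fun t ht => ?_)
  have : 0 ≤ sin (2 * η t) := by
    rcases (h t ht).eq_or_lt with h | h
    · simp [← h]
    · exact (S.S_pos h).le
  have := P_pos (s t); have := A_pos N (s t); positivity

lemma K_mono {a b : ℝ} (hab : a ≤ b) (h : ∀ t ∈ Ioo a b, hr N (s t) ≤ 0) :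
    Kf N η χ a ≤ Kf N η χ b := by
  refine mono_of S.dK hab (fun t ht => ?_)
  have h1 := neg_nonneg.2 (h t ht)
  have := P_pos (s t); have := S.C_pos t; have := S.CN_pos t
  have : 0 ≤ (2 * N + 1) * (-hr N (s t)) * P (s t) * cos (2 * η t) * cos (2 * η t) ^ N * sin (χ t) ^ 2 := by
    positivity
  linarith

lemma K_anti {a b : ℝ} (hab : a ≤ b) (h : ∀ t ∈ Ioo a b, 0 ≤ hr N (s t)) :
    Kf N η χ b ≤ Kf N η χ a := by
  have := mono_of (fun t => (S.dK t).neg) hab (fun t ht => by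
    have h1 := (h t ht)
    have := P_pos (s t); have := S.C_pos t; have := S.CN_pos t
    rw [neg_neg]; positivity)
  simp at this; exact this

lemma cY : Continuous (Yf N s η χ) := continuous_iff_continuousAt.2 fun t => (S.dY t).continuousAt
lemma ch : Continuous (fun t => hr N (s t)) := continuous_iff_continuousAt.2 fun t => (S.dh t).continuousAt

lemma Y_mono {a b : ℝ} (hab : a ≤ b) (h0 : 0 < Yf N s η χ a)
    (h1 : ∀ t ∈ Ioo a b, 0 ≤ η t ∧ 0 ≤ cos (χ t) ∧ sin (χ t) ≤ 0 ∧ 0 ≤ hr N (s t)) :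
    (∀ t ∈ Ioo a b, 0 < Yf N s η χ t) ∧ Yf N s η χ a ≤ Yf N s η χ b := by
  have key : ∀ t, t ∈ Ioo a b → 0 < Yf N s η χ t → 0 ≤ P (s t) * cos (2 * η t) * hr N (s t) * (2 * N * cos (χ t) * Yf N s η χ t +
      cos (2 * η t) ^ N * (sin (χ t) ^ 2 * sin (2 * η t)
        - sin (χ t) * cos (χ t) * cos (2 * η t) * (2 - hr N (s t)))) := by
    intro t ht hy
    obtain ⟨k1, k2, k3, k4⟩ := h1 t ht
    have := P_pos (s t); have := S.C_pos t; have := S.CN_pos t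
    have hh : 0 ≤ 2 - hr N (s t) := by linarith [hr_lt_one N (s t)]
    have h3 : 0 ≤ -sin (χ t) := by linarith
    have hS : 0 ≤ sin (2 * η t) := by
      rcases k1.eq_or_lt with h | h
      · simp [← h]
      · exact (S.S_pos h).le
    rw [sub_eq_add_neg, show -(sin (χ t) * cos (χ t) * cos (2 * η t) * (2 - hr N (s t))) = (-sin (χ t)) * cos (χ t) * cos (2 * η t) * (2 - hr N (s t)) by ring]
    positivity
  have hb := barrier (f := Yf N s η χ) S.cY (a := a) (b := b) h0 (by
    intro t ht hu
    refine lt_of_lt_of_le h0 (mono_of S.dY ht.1.le (fun u hu' => ?_))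
    exact key u ⟨hu'.1, hu'.2.trans_le ht.2⟩ (hu u ⟨hu'.1.le, hu'.2⟩))
  exact ⟨fun t ht => hb t (Ioo_subset_Icc_self ht),
    mono_of S.dY hab (fun u hu => key u hu (hb u (Ioo_subset_Icc_self hu)))⟩

lemma Y_pos {t : ℝ} (ht : 0 < t) (h1 : ∀ u ∈ Ioo 0 t, 0 < η u ∧ -(π/2) < χ u)
    (h2 : ∀ u ∈ Ioo 0 t, χ u ≤ 0) (h5 : 0 < hr N (s t)) : 0 < Yf N s η χ t := by
  obtain ⟨t0, ht0, h0, -⟩ := first_hit' S.ch (c := 0) ht.le (by simp only [S.s0]; exact S.hs1) h5.le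
  have ht0' : t0 < t := lt_of_le_of_ne ht0.2 (by rintro rfl; linarith)
  have hcos : ∀ u ∈ Ioo 0 t, 0 < cos (χ u) := fun u hu =>
    cos_pos_of_mem_Ioo ⟨(h1 u hu).2, by linarith [h2 u hu, pi_pos]⟩
  have hy0 : 0 < Yf N s η χ t0 := by
    simp only [Yf, Gf]
    rw [h0]
    have := S.CN_pos t0; have := hcos t0 ⟨ht0.1, ht0'⟩; have := S.S_pos (h1 t0 ⟨ht0.1, ht0'⟩).1
    simp; positivity
  refine lt_of_lt_of_le hy0 (S.Y_mono ht0'.le hy0 (fun u hu => ?_)).2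
  have hu' : u ∈ Ioo 0 t := ⟨ht0.1.trans hu.1, hu.2⟩
  refine ⟨(h1 u hu').1.le, (hcos u hu').le, ?_, ?_⟩
  · exact sin_nonpos_of_nonpos_of_neg_pi_le (h2 u hu') (by linarith [(h1 u hu').2, pi_pos])
  · skip
    rw [← h0]
    exact hr_anti N (S.s_anti hu.1.le (fun v hv => (hcos v ⟨ht0.1.trans hv.1, hv.2.trans hu'.2⟩).le))

lemma lemA {T : ℝ} (hG : Good η χ T) : ∀ t ∈ Ioo 0 T, -(π/2) < χ t := by
  intro t ht
  by_contra hn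
  push Not at hn
  obtain ⟨ε, hε, hst⟩ := S.start
  set a := min ε t / 2 with ha
  have hm : 0 < min ε t := lt_min hε ht.1
  have ha0 : 0 < a := by positivity
  have hae : a < ε := by have := min_le_left ε t; linarith
  have hat : a < t := by have := min_le_right ε t; linarith
  obtain ⟨u, hu, hu1, hu2⟩ := first_hit S.cc hat.le (hst a ⟨ha0, hae⟩).2.2 hn
  have hu0 : 0 < u := ha0.trans hu.1
  have hpre : ∀ v ∈ Ioo 0 u, 0 < η v ∧ χ v < π/2 ∧ -(π/2) < χ v := by
    intro v hv
    have g := hG v ⟨hv.1, hv.2.trans (lt_of_le_of_lt hu.2 ht.2)⟩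
    refine ⟨g.1, g.2, ?_⟩
    rcases lt_or_ge v a with h | h
    · exact (hst v ⟨hv.1, h.trans hae⟩).2.2
    · exact hu2 v ⟨h, hv.2⟩
  have hcos : ∀ v ∈ Ioo 0 u, 0 < cos (χ v) := fun v hv =>
    cos_pos_of_mem_Ioo ⟨(hpre v hv).2.2, (hpre v hv).2.1⟩
  have hneg : ∀ v ∈ Ioo 0 u, χ v ≤ 0 := by
    intro v hv
    have h1 := S.M_mono hv.2.le (fun w hw => (hpre w ⟨hv.1.trans hw.1, hw.2⟩).1.le)
    simp only [Mf, hu1, sin_neg, sin_pi_div_two] at h1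
    by_contra hc
    push Not at hc
    have : 0 < sin (χ v) := sin_pos_of_pos_of_lt_pi hc (by linarith [(hpre v hv).2.1, pi_pos])
    have := A_pos N (s v); have := A_pos N (s u)
    have : 0 < A N (s v) * sin (χ v) := by positivity
    linarith
  rcases le_or_gt (hr N (s u)) 0 with hh | hh
  · have h1 := S.K_mono (a := u/2) (b := u) (by linarith) (fun v hv => by
      refine (hr_anti N (S.s_anti hv.2.le fun w hw => (hcos w ⟨?_, hw.2⟩).le)).trans hh
      linarith [hv.1, hw.1])
    simp only [Kf, hu1, cos_neg, cos_pi_div_two, mul_zero] at h1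
    have := S.CN_pos (u/2)
    have := hcos (u/2) ⟨by linarith, by linarith⟩
    have : 0 < cos (2 * η (u/2)) ^ N * cos (χ (u/2)) := by positivity
    linarith
  · have h1 := S.Y_pos hu0 (fun v hv => ⟨(hpre v hv).1, (hpre v hv).2.2⟩) hneg hh
    simp only [Yf, Gf, hu1, cos_neg, cos_pi_div_two, sin_neg, sin_pi_div_two] at h1
    have := S.CN_pos u
    have := S.C_pos u
    have : 0 < cos (2 * η u) ^ N * (hr N (s u) * cos (2 * η u)) := by positivity
    nlinarith

lemma cos_pos' {T : ℝ} (hG : Good η χ T) : ∀ t ∈ Ioo 0 T, 0 < cos (χ t) := fun t ht =>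
  cos_pos_of_mem_Ioo ⟨S.lemA hG t ht, (hG t ht).2⟩

lemma P_ge {t : ℝ} (h : s t ≤ s1) : P s1 ≤ P (s t) := P_anti h

lemma event : ∃ T > 0, Good η χ T ∧ (η T = 0 ∨ χ T = π / 2) := by
  by_contra hno
  push Not at hno
  have hall : ∀ t, 0 < t → 0 < η t ∧ χ t < π/2 := by
    intro t ht
    by_contra hbad
    have hcl : IsClosed {t | η t ≤ 0 ∨ π/2 ≤ χ t} :=
      (isClosed_le S.ce continuous_const).union (isClosed_le continuous_const S.cc)
    have htZ : t ∈ {t | η t ≤ 0 ∨ π/2 ≤ χ t} := by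
      by_contra hc
      simp only [mem_setOf_eq, not_or, not_le] at hc
      exact hbad hc
    obtain ⟨ε, hε, hst⟩ := S.start
    set a := min ε t / 2 with ha
    have hm : 0 < min ε t := lt_min hε ht
    have ha0 : 0 < a := by positivity
    have hae : a < ε := by have := min_le_left ε t; linarith
    have hat : a < t := by have := min_le_right ε t; linarith
    obtain ⟨u, hu, hu1, hu2⟩ := first_time hcl hat.le htZ
    have hau : a < u := by
      refine lt_of_le_of_ne hu.1 ?_
      rintro rfl
      have := hst a ⟨ha0, hae⟩
      rcases hu1 with h | h <;> linarith
    have hG : Good η χ u := by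
      intro v hv
      rcases lt_or_ge v a with h | h
      · exact ⟨(hst v ⟨hv.1, h.trans hae⟩).1, (hst v ⟨hv.1, h.trans hae⟩).2.1⟩
      · have := hu2 v ⟨h, hv.2⟩
        simp only [mem_setOf_eq, not_or, not_le] at this
        exact this
    have hn := hno u (ha0.trans hau) hG
    rcases hu1 with h | h
    · exact hn.1 (le_antisymm h (left_ge S.ce (ha0.trans hau) fun v hv => (hG v hv).1.le))
    · exact hn.2 (le_antisymm (left_le S.cc (ha0.trans hau) fun v hv => (hG v hv).2.le) h)
  have hG : ∀ T, Good η χ T := fun T t ht => hall t ht.1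
  have hlow : ∀ t, 0 < t → -(π/2) < χ t := fun t ht => S.lemA (hG (t+1)) t ⟨ht, by linarith⟩
  have hcos : ∀ t, 0 < t → 0 < cos (χ t) := fun t ht => S.cos_pos' (hG (t+1)) t ⟨ht, by linarith⟩
  have hsle : ∀ a b, 0 ≤ a → a ≤ b → s b ≤ s a := fun a b ha hab =>
    S.s_anti hab (fun t ht => (hcos t (lt_of_le_of_lt ha ht.1)).le)
  have hs1 : ∀ t, 0 < t → s t ≤ s1 := fun t ht => by
    have := hsle 0 t le_rfl ht.le; rwa [S.s0] at this
  have hP1 := P_pos s1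
  -- B1
  have B1 : ∃ t, 0 < t ∧ 0 < χ t := by
    by_contra hneg
    push Not at hneg
    have hsin : ∀ t, 0 < t → sin (χ t) ≤ 0 := fun t ht =>
      sin_nonpos_of_nonpos_of_neg_pi_le (hneg t ht) (by linarith [hlow t ht, pi_pos])
    by_cases hh : ∀ t, 0 < t → hr N (s t) ≤ 0
    · set k := Kf N η χ 1 with hk
      have hk0 : 0 < k := mul_pos (S.CN_pos 1) (hcos 1 one_pos)
      have hb : ∀ t, 1 ≤ t → k ≤ cos (2 * η t) ∧ k ≤ cos (χ t) := by
        intro t ht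
        have h1 : k ≤ Kf N η χ t := S.K_mono ht (fun u hu => hh u (by linarith [hu.1]))
        have t0 : 0 < t := by linarith
        unfold Kf at h1
        constructor
        · refine h1.trans ((mul_le_of_le_one_right (S.CN_pos t).le (cos_le_one _)).trans (S.CN_le_C t))
        · exact h1.trans (mul_le_of_le_one_left (hcos t t0).le (S.CN_le t))
      have hd : ∀ T, 1 ≤ T → -(s 1) - P s1 * k * k * 1 ≤ -(s T) - P s1 * k * k * T := by
        intro T hT
        refine mono_of (f := fun t => -(s t) - P s1 * k * k * t)
          (fun t => (S.ds t).neg.sub ((hasDerivAt_id t).const_mul (P s1 * k * k))) hT (fun t ht => ?_)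
        have := hb t ht.1.le
        have t0 : 0 < t := by linarith [ht.1]
        have : P s1 * k * k ≤ P (s t) * cos (2 * η t) * cos (χ t) := by
          have := S.P_ge (hs1 t t0); have := P_pos (s t); have := S.C_pos t
          gcongr <;> tauto
        simp; linarith
      have hs0 : ∀ t, 0 < t → 0 ≤ s t := by
        intro t ht
        have := hh t ht
        unfold hr at this
        have h2 : (1:ℝ) ≤ exp (2 * s t) / (2 * (2 * N + 1)) := by linarith
        rw [le_div_iff₀ (by positivity)] at h2
        have : (0:ℝ) ≤ N := Nat.cast_nonneg N
        have : 1 ≤ exp (2 * s t) := by linarith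
        have := one_le_exp_iff.1 this
        linarith
      have hq : 0 < P s1 * k * k := by positivity
      set q := P s1 * k * k
      have h1 := hd (1 + (s 1 + 1)/q) (by have := hs0 1 one_pos; have : 0 ≤ (s 1 + 1)/q := by positivity
                                          linarith)
      have h2 := hs0 (1 + (s 1 + 1)/q) (by have := hs0 1 one_pos; positivity)
      have h3 : q * (1 + (s 1 + 1)/q) = q + (s 1 + 1) := by field_simp
      rw [h3] at h1
      linarith
    · push Not at hh
      obtain ⟨t0, ht0, hh0⟩ := hh
      set y := Yf N s η χ t0 with hy
      have hy0 : 0 < y := S.Y_pos ht0 (fun u hu => ⟨(hall u hu.1).1, hlow u hu.1⟩)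
        (fun u hu => hneg u hu.1) hh0
      have hge : ∀ t, t0 ≤ t → hr N (s t0) ≤ hr N (s t) := fun t ht => hr_anti N (hsle t0 t ht0.le ht)
      have hY : ∀ t, t0 ≤ t → y ≤ Yf N s η χ t := fun t ht => (S.Y_mono ht hy0 (fun u hu => by
        have u0 : 0 < u := ht0.trans hu.1
        exact ⟨(hall u u0).1.le, (hcos u u0).le, hsin u u0, hh0.le.trans (hge u hu.1.le)⟩)).2
      have hYle : ∀ t, t0 ≤ t → Yf N s η χ t ≤ cos (2 * η t) ^ N * cos (χ t) := by
        intro t ht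
        have u0 : 0 < t := ht0.trans_le ht
        unfold Yf Gf
        have h1 := S.CN_pos t
        have h2 : sin (χ t) * hr N (s t) * cos (2 * η t) ≤ 0 := by
          apply mul_nonpos_of_nonpos_of_nonneg _ (S.C_pos t).le
          exact mul_nonpos_of_nonpos_of_nonneg (hsin t u0) (hh0.le.trans (hge t ht))
        have h3 : cos (χ t) * sin (2 * η t) ≤ cos (χ t) :=
          mul_le_of_le_one_right (hcos t u0).le (sin_le_one _)
        gcongr; linarith
      have hb : ∀ t, t0 ≤ t → y ≤ cos (2 * η t) ∧ y ≤ cos (χ t) := by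
        intro t ht
        have h1 := (hY t ht).trans (hYle t ht)
        have u0 : 0 < t := ht0.trans_le ht
        constructor
        · refine h1.trans ((mul_le_of_le_one_right (S.CN_pos t).le (cos_le_one _)).trans (S.CN_le_C t))
        · exact h1.trans (mul_le_of_le_one_left (hcos t u0).le (S.CN_le t))
      set q := P s1 * y * hr N (s t0) * (2 * N * y * y) with hq
      have hN : (1:ℝ) ≤ N := by exact_mod_cast S.hN
      have hq0 : 0 < q := by positivity
      have hd : ∀ T, t0 ≤ T → Yf N s η χ t0 - q * t0 ≤ Yf N s η χ T - q * T := by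
        intro T hT
        refine mono_of (f := fun t => Yf N s η χ t - q * t)
          (fun t => (S.dY t).sub ((hasDerivAt_id t).const_mul q)) hT (fun t ht => ?_)
        have ⟨b1, b2⟩ := hb t ht.1.le
        have b3 := hY t ht.1.le
        have b4 := hge t ht.1.le
        have u0 : 0 < t := ht0.trans ht.1
        have b5 := S.P_ge (hs1 t u0)
        have hc := hcos t u0; have := P_pos (s t); have := S.C_pos t; have := S.CN_pos t
        have hS := S.S_pos (hall t u0).1
        have hσ : 0 ≤ -sin (χ t) := by linarith [hsin t u0]
        have h2h : 0 ≤ 2 - hr N (s t) := by linarith [hr_lt_one N (s t)]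
        have hh1 : 0 ≤ hr N (s t) := hh0.le.trans b4
        have e1 : 2 * N * y * y ≤ 2 * N * cos (χ t) * Yf N s η χ t := by gcongr
        have e2 : 0 ≤ cos (2 * η t) ^ N * (sin (χ t) ^ 2 * sin (2 * η t)
            - sin (χ t) * cos (χ t) * cos (2 * η t) * (2 - hr N (s t))) := by
          rw [sub_eq_add_neg, show -(sin (χ t) * cos (χ t) * cos (2 * η t) * (2 - hr N (s t))) = (-sin (χ t)) * cos (χ t) * cos (2 * η t) * (2 - hr N (s t)) by ring]
          positivity
        have e3 : q ≤ P (s t) * cos (2 * η t) * hr N (s t) * (2 * N * cos (χ t) * Yf N s η χ t +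
          cos (2 * η t) ^ N * (sin (χ t) ^ 2 * sin (2 * η t)
            - sin (χ t) * cos (χ t) * cos (2 * η t) * (2 - hr N (s t)))) := by
          rw [hq]; gcongr; linarith
        simp only [mul_one]; linarith
      have hY1 : ∀ t, t0 ≤ t → Yf N s η χ t ≤ 1 := fun t ht => (hYle t ht).trans (by
        have := mul_le_one₀ (S.CN_le t) (hcos t (ht0.trans_le ht)).le (cos_le_one (χ t)); exact this)
      have h1 := hd (t0 + 1/q) (by have : 0 < 1/q := by positivity
                                   linarith)
      have h2 := hY1 (t0 + 1/q) (by have : 0 < 1/q := by positivity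
                                    linarith)
      have h3 : q * (t0 + 1/q) = q * t0 + 1 := by field_simp
      rw [h3] at h1
      linarith
  obtain ⟨t1, ht1, hχ1⟩ := B1
  set m := Mf N s χ t1 with hm
  have hm0 : 0 < m := mul_pos (A_pos _ _) (sin_pos_of_pos_of_lt_pi hχ1 (by linarith [(hall t1 ht1).2, pi_pos]))
  set E := exp ((2 * N + 1) * s1) with hE
  have hE0 : 0 < E := exp_pos _
  have hσ : ∀ t, t1 ≤ t → m / E ≤ sin (χ t) := by
    intro t ht
    have u0 := ht1.trans_le ht
    have h1 : m ≤ A N (s t) * sin (χ t) := S.M_mono ht (fun u hu => (hall u (ht1.trans hu.1)).1.le)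
    have h2 := A_le N (hs1 t u0)
    have h4 := A_pos N (s t)
    have h3 : 0 < sin (χ t) := by
      by_contra hc
      have := mul_nonpos_of_nonneg_of_nonpos h4.le (not_lt.1 hc)
      linarith
    rw [div_le_iff₀ hE0]
    nlinarith
  have hδ : 0 < m / E := by positivity
  have hC : ∀ t, t1 ≤ t → cos (2 * η t1) ≤ cos (2 * η t) := by
    intro t ht
    have h1 := S.e_anti ht (fun u hu => hδ.le.trans (hσ u hu.1.le))
    have h2 := (hall t (ht1.trans_le ht)).1
    have h3 := (abs_lt.1 (S.e_lt t1)).2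
    exact cos_le_cos_of_nonneg_of_le_pi (by linarith) (by linarith [pi_pos]) (by linarith)
  set q := P s1 * cos (2 * η t1) * (m / E) with hq
  have := S.C_pos t1
  have hq0 : 0 < q := by positivity
  have hd : ∀ T, t1 ≤ T → -(η t1) - q * t1 ≤ -(η T) - q * T := by
    intro T hT
    refine mono_of (f := fun t => -(η t) - q * t)
      (fun t => (S.de t).neg.sub ((hasDerivAt_id t).const_mul q)) hT (fun t ht => ?_)
    have b1 := hσ t ht.1.le
    have b2 := hC t ht.1.le
    have b3 := S.P_ge (hs1 t (ht1.trans ht.1))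
    have := P_pos (s t); have := S.C_pos t
    have : q ≤ P (s t) * cos (2 * η t) * sin (χ t) := by rw [hq]; gcongr
    simp only [mul_one]; linarith
  have h0 := (hall t1 ht1).1
  have hp : 0 < η t1 / q := by positivity
  have h1 := hd (t1 + η t1/q) (by linarith)
  have h2 := (hall (t1 + η t1/q) (by linarith)).1
  have h3 : q * (t1 + η t1/q) = q * t1 + η t1 := by field_simp
  rw [h3] at h1
  linarith

lemma E1 {T : ℝ} (hT : 0 < T) (hG : Good η χ T) (hc : χ T = π / 2) : 0 < hr N (s T) := by
  by_contra hh
  push Not at hh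
  have h1 := S.K_mono (a := T/2) (b := T) (by linarith) (fun v hv => by
      refine (hr_anti N (S.s_anti hv.2.le fun w hw => (S.cos_pos' hG w ⟨?_, hw.2⟩).le)).trans hh
      linarith [hv.1, hw.1])
  simp only [Kf, hc, cos_pi_div_two, mul_zero] at h1
  have := S.CN_pos (T/2)
  have := S.cos_pos' hG (T/2) ⟨by linarith, by linarith⟩
  have : 0 < cos (2 * η (T/2)) ^ N * cos (χ (T/2)) := by positivity
  linarith

lemma E2 {T : ℝ} (hT : 0 < T) (hG : Good η χ T) (hc : η T = 0) : 0 < χ T := by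
  have : ∃ u ∈ Ioo 0 T, 0 < sin (χ u) := by
    by_contra hn
    push Not at hn
    have := S.e_mono (a := T/2) (b := T) (by linarith) (fun u hu => hn u ⟨by linarith [hu.1], hu.2⟩)
    have := (hG (T/2) ⟨by linarith, by linarith⟩).1
    linarith
  obtain ⟨u, hu, hs⟩ := this
  have h1 := S.M_mono hu.2.le (fun v hv => (hG v ⟨hu.1.trans hv.1, hv.2⟩).1.le)
  simp only [Mf] at h1
  have h2 := A_pos N (s u)
  have h3 := A_pos N (s T)
  have h4 : 0 < A N (s u) * sin (χ u) := by positivity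
  have h5 : -(π/2) ≤ χ T := left_ge S.cc hT (fun v hv => (S.lemA hG v hv).le)
  by_contra hx
  push Not at hx
  have : sin (χ T) ≤ 0 := sin_nonpos_of_nonpos_of_neg_pi_le hx (by linarith [pi_pos])
  have := mul_nonpos_of_nonneg_of_nonpos h3.le this
  linarith

/-- turning time -/
lemma turn {T : ℝ} (hT : 0 < T) (hG : Good η χ T) (hc : 0 < χ T) :
    ∃ m ∈ Ioo 0 T, χ m = 0 ∧ (∀ t ∈ Ico 0 m, χ t < 0) ∧ (∀ t ∈ Icc m T, 0 ≤ χ t) := by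
  obtain ⟨m, hm, h1, h2⟩ := first_hit' S.cc hT.le (c := 0) (by rw [S.c0]; linarith [pi_pos]) hc.le
  have hmT : m < T := lt_of_le_of_ne hm.2 (by rintro rfl; linarith)
  refine ⟨m, ⟨hm.1, hmT⟩, h1, h2, fun t ht => ?_⟩
  rcases ht.2.eq_or_lt with h | h
  · rw [h]; exact hc.le
  have k1 := S.M_mono ht.1 (fun v hv => (hG v ⟨hm.1.trans hv.1, hv.2.trans h⟩).1.le)
  simp only [Mf, h1, sin_zero, mul_zero] at k1
  by_contra hx
  push Not at hx
  have k2 := S.lemA hG t ⟨hm.1.trans_le ht.1, h⟩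
  have : sin (χ t) < 0 := sin_neg_of_neg_of_neg_pi_lt hx (by linarith [pi_pos])
  have := mul_neg_of_pos_of_neg (A_pos N (s t)) this
  linarith

end Sol
end Shrinker

open Real Set

namespace Shrinker
namespace Sol
variable {N : ℕ} {s1 : ℝ} {s η χ : ℝ → ℝ} (S : Sol N s1 s η χ)
include S

noncomputable def J (η : ℝ → ℝ) (t : ℝ) : ℝ := -(1/2) * log (cos (2 * η t))

lemma dJ (t : ℝ) : HasDerivAt (J η) (-(sin (2 * η t) * P (s t) * sin (χ t))) t := by
  have := ((S.dcos t).log (S.C_pos t).ne').const_mul (-(1/2))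
  refine this.congr_deriv ?_
  have := (S.C_pos t).ne'
  field_simp

lemma sJ {t : ℝ} (h0 : 0 ≤ cos (χ t)) (h1 : 0 ≤ η t) :
    Kf N η χ t * (-(sin (2 * η t) * P (s t) * sin (χ t))) ≤ P (s t) * cos (2 * η t) * cos (χ t) := by
  have hS : 0 ≤ sin (2 * η t) := by
    rcases h1.eq_or_lt with h | h
    · simp [← h]
    · exact (S.S_pos h).le
  have hP := P_pos (s t)
  have hC := S.CN_pos t
  have hK : 0 ≤ Kf N η χ t := mul_nonneg hC.le h0
  have a1 : -(sin (2 * η t) * P (s t) * sin (χ t)) ≤ P (s t) := by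
    have b1 : sin (2 * η t) * (-sin (χ t)) ≤ 1 := by
      have := neg_one_le_sin (χ t); have := sin_le_one (2 * η t)
      calc sin (2 * η t) * (-sin (χ t)) ≤ sin (2 * η t) * 1 := by gcongr; linarith
        _ ≤ 1 := by linarith
    nlinarith
  calc _ ≤ Kf N η χ t * P (s t) := by gcongr
    _ ≤ cos (2 * η t) * cos (χ t) * P (s t) := by
        unfold Kf; gcongr; exact S.CN_le_C t
    _ = _ := by ring

set_option maxHeartbeats 2000000 in
lemma twoA_aux {δ β c2 : ℝ} (hδ0 : 0 < δ) (hβ : β = cos (π/4) ^ N)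
    (hc2 : c2 = (2 * N + 1) * β * π / 16)
    (hs : hr N s1 = -(δ / (2 * N + 1))) (hδ1 : δ ≤ β / 2) (hδ2 : δ ≤ c2 / 2)
    (hδ3 : δ ≤ exp (-2 * (-(1/2) * log (cos (π/4)) + 2 / c2)) ^ N)
    {T : ℝ} (hT : 0 < T) (hG : Good η χ T) (he : η T = 0) (hc : χ T < π / 2) : False := by
  have hπ := pi_pos
  have hcp : 0 < cos (π/4) := by rw [cos_pi_div_four]; positivity
  have hβ0 : 0 < β := by rw [hβ]; positivity
  have hκ : (0:ℝ) < 2 * N + 1 := by positivity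
  have hc20 : 0 < c2 := by rw [hc2]; positivity
  have hN0 : N ≠ 0 := by have := S.hN; omega
  have hχT := S.E2 hT hG he
  obtain ⟨m, hm, hm1, hm2, hm3⟩ := S.turn hT hG hχT
  have hcos : ∀ t ∈ Ioo 0 T, 0 < cos (χ t) := S.cos_pos' hG
  have hcosT : 0 < cos (χ T) := cos_pos_of_mem_Ioo ⟨by linarith, hc⟩
  have hpre : ∀ t ∈ Ioo 0 m, 0 < η t ∧ 0 < cos (χ t) ∧ sin (χ t) ≤ 0 := by
    intro t ht
    have ht' : t ∈ Ioo 0 T := ⟨ht.1, ht.2.trans hm.2⟩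
    exact ⟨(hG t ht').1, hcos t ht', sin_nonpos_of_nonpos_of_neg_pi_le (hm2 t ⟨ht.1.le, ht.2⟩).le
      (by linarith [S.lemA hG t ht'])⟩
  have hpost : ∀ t ∈ Ioo m T, 0 < η t ∧ 0 < cos (χ t) ∧ 0 ≤ sin (χ t) := by
    intro t ht
    have ht' : t ∈ Ioo 0 T := ⟨hm.1.trans ht.1, ht.2⟩
    exact ⟨(hG t ht').1, hcos t ht', sin_nonneg_of_nonneg_of_le_pi (hm3 t (Ioo_subset_Icc_self ht))
      (by linarith [(hG t ht').2])⟩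
  have hsan : ∀ a b, 0 ≤ a → a ≤ b → b ≤ T → s b ≤ s a := fun a b h1 h2 h3 =>
    S.s_anti h2 (fun t ht => (hcos t ⟨by linarith [ht.1], by linarith [ht.2]⟩).le)
  have hhm : ∀ a b, 0 ≤ a → a ≤ b → b ≤ T → hr N (s a) ≤ hr N (s b) := fun a b h1 h2 h3 =>
    hr_anti N (hsan a b h1 h2 h3)
  have heup : ∀ a b, 0 ≤ a → a ≤ b → b ≤ m → η a ≤ η b := fun a b h1 h2 h3 =>
    S.e_mono h2 (fun t ht => (hpre t ⟨by linarith [ht.1], by linarith [ht.2]⟩).2.2)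
  have hedn : ∀ a b, m ≤ a → a ≤ b → b ≤ T → η b ≤ η a := fun a b h1 h2 h3 =>
    S.e_anti h2 (fun t ht => (hpost t ⟨by linarith [ht.1], by linarith [ht.2]⟩).2.2)
  have heta : ∀ t ∈ Icc 0 T, 0 ≤ η t := by
    intro t ht
    rcases le_or_gt t m with h | h
    · have := heup 0 t le_rfl ht.1 h; rwa [S.e0] at this
    · have := hedn t T h.le ht.2 le_rfl; rwa [he] at this
  -- K ≤ δ η
  have hKδ : ∀ t ∈ Icc 0 m, Kf N η χ t ≤ δ * η t := by
    intro t ht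
    have := mono_of (f := fun t => δ * η t - Kf N η χ t)
      (fun t => ((S.de t).const_mul δ).sub (S.dK t)) ht.1 (fun u hu => by
        obtain ⟨k1, k2, k3⟩ := hpre u ⟨hu.1, hu.2.trans_le ht.2⟩
        have h1 := hhm 0 u le_rfl hu.1.le (by linarith [hu.2, ht.2, hm.2])
        rw [S.s0, hs] at h1
        have hP := P_pos (s u); have hC := S.C_pos u; have hCN := S.CN_pos u
        have h2 : -((2 * N + 1) * hr N (s u)) ≤ δ := by
          have : (2 * N + 1) * (-(δ/(2*N+1))) ≤ (2 * N + 1) * hr N (s u) := by gcongr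
          have e : (2 * N + 1) * (-(δ/(2*(N:ℝ)+1))) = -δ := by field_simp
          linarith
        have h3 : cos (2 * η u) ^ N * sin (χ u) ^ 2 ≤ -sin (χ u) := by
          calc cos (2 * η u) ^ N * sin (χ u) ^ 2 ≤ 1 * sin (χ u) ^ 2 := by gcongr; exact S.CN_le u
            _ ≤ - sin (χ u) := by nlinarith [neg_one_le_sin (χ u)]
        have h4 : -((2 * N + 1) * hr N (s u)) * (cos (2 * η u) ^ N * sin (χ u) ^ 2) ≤ δ * (-sin (χ u)) := by
          refine (mul_le_mul_of_nonneg_right h2 (by positivity)).trans ?_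
          gcongr
        have h5 : 0 < P (s u) * cos (2 * η u) := by positivity
        nlinarith [mul_le_mul_of_nonneg_left h4 h5.le])
    simp only [S.e0, S.K0] at this
    linarith
  have hη1 : ∀ t, η t < 1 := fun t => by
    have := (abs_lt.1 (S.e_lt t)).2
    have := pi_lt_four
    linarith
  have hKle : ∀ t ∈ Icc 0 m, Kf N η χ t ≤ δ := fun t ht =>
    (hKδ t ht).trans (mul_le_of_le_one_right hδ0.le (hη1 t).le)
  have hKm : Kf N η χ m = cos (2 * η m) ^ N := by simp [Kf, hm1]
  have hCm : cos (2 * η m) ^ N ≤ δ := by rw [← hKm]; exact hKle m ⟨hm.1.le, le_rfl⟩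
  have hηm : π / 8 < η m := by
    by_contra hn
    push Not at hn
    have h1 : cos (π/4) ≤ cos (2 * η m) :=
      cos_le_cos_of_nonneg_of_le_pi (by linarith [heta m ⟨hm.1.le, hm.2.le⟩]) (by linarith) (by linarith)
    have : β ≤ cos (2 * η m) ^ N := by rw [hβ]; gcongr
    linarith
  have hJm : -(1/2) * log (cos (π/4)) + 2 / c2 ≤ J η m := by
    have h1 := hCm.trans hδ3
    have h2 := (pow_le_pow_iff_left₀ (S.C_pos m).le (exp_pos _).le hN0).1 h1
    have h3 := log_le_log (S.C_pos m) h2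
    rw [log_exp] at h3
    unfold J; linarith
  -- generic small-η estimates
  have hsmall : ∀ t, 0 ≤ η t → η t ≤ π/8 → 0 ≤ cos (χ t) → Kf N η χ t ≤ δ →
      β ≤ cos (2 * η t) ^ N ∧ |sin (χ t)| / 2 ≤ sin (χ t) ^ 2 := by
    intro t h1 h2 h3 h4
    have h5 : cos (π/4) ≤ cos (2 * η t) :=
      cos_le_cos_of_nonneg_of_le_pi (by linarith) (by linarith) (by linarith)
    have h6 : β ≤ cos (2 * η t) ^ N := by rw [hβ]; gcongr
    refine ⟨h6, ?_⟩
    unfold Kf at h4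
    have h7 : β * cos (χ t) ≤ β * (1/2) := by nlinarith
    have h8 := le_of_mul_le_mul_left h7 hβ0
    have := sin_sq_add_cos_sq (χ t)
    have := abs_sin_le_one (χ t)
    nlinarith
  -- time t1
  obtain ⟨t1, ht1, h11, h12⟩ := first_hit' S.ce hm.1.le (c := π/8) (by rw [S.e0]; positivity) hηm.le
  have hJ1 : J η t1 = -(1/2) * log (cos (π/4)) := by
    unfold J; rw [h11]; congr 3; ring
  have hcJ : Continuous (J η) := continuous_iff_continuousAt.2 fun t => (S.dJ t).continuousAt
  have hc2i : 0 < 1 / c2 := by positivity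
  have e22 : 2 / c2 = 2 * (1 / c2) := by ring
  obtain ⟨t2, ht2, h21, -⟩ := first_hit' hcJ ht1.2 (c := J η t1 + (1/2) * (1/c2)) (by linarith) (by linarith)
  have hJmono : ∀ t ∈ Ioo 0 m, 0 ≤ -(sin (2 * η t) * P (s t) * sin (χ t)) := by
    intro t ht
    obtain ⟨k1, k2, k3⟩ := hpre t ht
    have := S.S_pos k1; have := P_pos (s t)
    rw [← mul_neg]
    have : 0 ≤ -sin (χ t) := by linarith
    positivity
  -- step i
  have hh2 : 0 ≤ hr N (s t2) := by
    by_contra hneg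
    push Not at hneg
    have hlt : ∀ t, 0 ≤ t → t ≤ t2 → hr N (s t) < 0 := fun t h1 h2 =>
      lt_of_le_of_lt (hhm t t2 h1 h2 (by linarith [ht2.2, hm.2])) hneg
    have hK1 : (1/2) * β * (2 * N + 1) * (-hr N (s t1)) * (π/8) ≤ Kf N η χ t1 := by
      have := mono_of (f := fun t => Kf N η χ t - (1/2) * β * (2 * N + 1) * (-hr N (s t1)) * η t)
        (fun t => (S.dK t).sub ((S.de t).const_mul _)) ht1.1.le (fun u hu => by
          have hum : u ∈ Ioo 0 m := ⟨hu.1, hu.2.trans_le ht1.2⟩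
          obtain ⟨k1, k2, k3⟩ := hpre u hum
          obtain ⟨q1, q2⟩ := hsmall u k1.le (h12 u ⟨hu.1.le, hu.2⟩).le k2.le (hKle u (Ioo_subset_Icc_self hum))
          rw [abs_of_nonpos k3] at q2
          have h1 := hhm u t1 hu.1.le hu.2.le (by linarith [ht1.2, hm.2])
          have h2 := hlt t1 ht1.1.le ht2.1.le
          have hP := P_pos (s u); have hC := S.C_pos u
          have h3 : β * (-sin (χ u) / 2) * (-hr N (s t1)) ≤ cos (2 * η u) ^ N * sin (χ u) ^ 2 * (-hr N (s u)) := by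
            have := S.CN_pos u
            apply mul_le_mul _ (by linarith) (by linarith) (by positivity)
            apply mul_le_mul q1 q2 (by linarith) (by positivity)
          have h5 : 0 < P (s u) * cos (2 * η u) * (2 * N + 1) := by positivity
          nlinarith [mul_le_mul_of_nonneg_left h3 h5.le])
      simp only [S.e0, S.K0, h11] at this
      linarith
    have hgr : hr N (s t1) + 2 * Kf N η χ t1 * ((1/2) * (1/c2)) ≤ hr N (s t2) := by
      have := mono_of (f := fun t => hr N (s t) - 2 * Kf N η χ t1 * J η t)
        (fun t => (S.dh t).sub ((S.dJ t).const_mul _)) ht2.1.le (fun u hu => by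
          have hum : u ∈ Ioo 0 m := ⟨ht1.1.trans hu.1, hu.2.trans_le ht2.2⟩
          obtain ⟨k1, k2, k3⟩ := hpre u hum
          have h1 : Kf N η χ t1 ≤ Kf N η χ u := S.K_mono hu.1.le (fun v hv =>
            (hlt v (by linarith [ht1.1, hv.1]) (by linarith [hu.2, hv.2])).le)
          have h2 := S.sJ k2.le k1.le
          have h3 := mul_le_mul_of_nonneg_right h1 (hJmono u hum)
          have h4 := hlt u (by linarith [hum.1]) hu.2.le
          have hP := P_pos (s u); have hC := S.C_pos u
          have h5 : 0 ≤ P (s u) * cos (2 * η u) * cos (χ u) := by positivity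
          nlinarith [mul_nonneg (by linarith : 0 ≤ -hr N (s u)) h5])
      simp only [h21] at this
      linarith
    have e1 : 2 * ((1/2) * β * (2 * N + 1) * (-hr N (s t1)) * (π/8)) * ((1/2) * (1/c2)) = - hr N (s t1) := by
      rw [hc2]; field_simp; ring
    have e2 : 2 * ((1/2) * β * (2 * N + 1) * (-hr N (s t1)) * (π/8)) * ((1/2) * (1/c2)) ≤ 2 * Kf N η χ t1 * ((1/2) * (1/c2)) := by
      gcongr
    linarith
  have hhp : ∀ t, t2 ≤ t → t ≤ T → 0 ≤ hr N (s t) := fun t h1 h2 =>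
    hh2.trans (hhm t2 t (by linarith [ht2.1, ht1.1]) h1 h2)
  -- step iii
  obtain ⟨t3, ht3, h31, -⟩ := first_hit S.ce hm.2.le (c := π/8) hηm (by rw [he]; positivity)
  have hKpost : ∀ t, m ≤ t → t ≤ T → Kf N η χ t ≤ Kf N η χ m := fun t h1 h2 =>
    S.K_anti h1 (fun u hu => hhp u (by linarith [ht2.2, hu.1]) (by linarith [hu.2]))
  have hKm0 : Kf N η χ m ≤ δ := hKle m ⟨hm.1.le, le_rfl⟩
  have hfin : Kf N η χ T ≤ Kf N η χ m - c2 * hr N (s m) := by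
    have := mono_of (f := fun t => (1/2) * β * (2 * N + 1) * hr N (s m) * η t - Kf N η χ t)
      (fun t => ((S.de t).const_mul _).sub (S.dK t)) ht3.2 (fun u hu => by
        have hum : u ∈ Ioo m T := ⟨ht3.1.trans hu.1, hu.2⟩
        obtain ⟨k1, k2, k3⟩ := hpost u hum
        have hle : η u ≤ π/8 := by rw [← h31]; exact hedn t3 u ht3.1.le hu.1.le hu.2.le
        obtain ⟨q1, q2⟩ := hsmall u k1.le hle k2.le ((hKpost u hum.1.le hum.2.le).trans hKm0)
        rw [abs_of_nonneg k3] at q2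
        have h1 := hhm m u hm.1.le hum.1.le hum.2.le
        have h2 := hhp m ht2.2 hm.2.le
        have hP := P_pos (s u); have hC := S.C_pos u
        have h3 : β * (sin (χ u) / 2) * (hr N (s m)) ≤ cos (2 * η u) ^ N * sin (χ u) ^ 2 * (hr N (s u)) := by
          have := S.CN_pos u
          apply mul_le_mul _ (by linarith) (by linarith) (by positivity)
          apply mul_le_mul q1 q2 (by linarith) (by positivity)
        have h5 : 0 < P (s u) * cos (2 * η u) * (2 * N + 1) := by positivity
        nlinarith [mul_le_mul_of_nonneg_left h3 h5.le])
    simp only [he, h31] at this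
    have h1 := hKpost t3 ht3.1.le ht3.2
    rw [hc2]
    linarith
  have hKT : 0 < Kf N η χ T := mul_pos (S.CN_pos T) hcosT
  have hhalf : hr N (s m) < 1 / 2 := by
    have : c2 * hr N (s m) < c2 * (1/2) := by linarith
    exact lt_of_mul_lt_mul_left this hc20.le
  -- step ii
  have hii : Kf N η χ m * (J η m - J η t2) ≤ hr N (s m) := by
    have := mono_of (f := fun t => hr N (s t) - Kf N η χ m * J η t)
      (fun t => (S.dh t).sub ((S.dJ t).const_mul _)) ht2.2 (fun u hu => by
        have hum : u ∈ Ioo 0 m := ⟨ht1.1.trans (ht2.1.trans hu.1), hu.2⟩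
        obtain ⟨k1, k2, k3⟩ := hpre u hum
        have h1 : Kf N η χ m ≤ Kf N η χ u := S.K_anti hu.2.le (fun v hv =>
          hhp v (by linarith [hu.1, hv.1]) (by linarith [hm.2, hv.2]))
        have h2 := S.sJ k2.le k1.le
        have h3 := mul_le_mul_of_nonneg_right h1 (hJmono u hum)
        have h4 := hhm u m hum.1.le hum.2.le hm.2.le
        have hP := P_pos (s u); have hC := S.C_pos u
        have h5 : 0 ≤ P (s u) * cos (2 * η u) * cos (χ u) := by positivity
        nlinarith [mul_nonneg (by linarith : 0 ≤ 1 / 2 - hr N (s u)) h5])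
    linarith
  have hKmpos : 0 < Kf N η χ m := by rw [hKm]; exact S.CN_pos m
  have hJd : 1 / c2 ≤ J η m - J η t2 := by rw [h21]; linarith
  have h1 : Kf N η χ m * (1 / c2) ≤ hr N (s m) := (by gcongr : Kf N η χ m * (1 / c2) ≤ Kf N η χ m * (J η m - J η t2)).trans hii
  have h2 : c2 * (Kf N η χ m * (1 / c2)) = Kf N η χ m := by field_simp
  have h3 := mul_le_mul_of_nonneg_left h1 hc20.le
  linarith

end Sol

theorem twoA (N : ℕ) : ∃ s1, hr N s1 < 0 ∧ ∀ s η χ, Sol N s1 s η χ → ∀ T > 0, Good η χ T →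
    η T = 0 → χ T < π / 2 → False := by
  have hcp : 0 < cos (π/4) := by rw [cos_pi_div_four]; positivity
  set β := cos (π/4) ^ N with hβ
  have hβ0 : 0 < β := by positivity
  have hπ := pi_pos
  set c2 := (2 * N + 1) * β * π / 16 with hc2
  have hc20 : 0 < c2 := by positivity
  set δ := min (min (β/2) (c2/2)) (exp (-2 * (-(1/2) * log (cos (π/4)) + 2 / c2)) ^ N) with hδ
  have hδ0 : 0 < δ := by positivity
  have hκ : (0:ℝ) < 2 * N + 1 := by positivity
  have e : hr N (log (2 * (2 * N + 1) * (1 + δ / (2 * N + 1))) / 2) = -(δ / (2 * N + 1)) := by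
    unfold hr
    rw [mul_div_cancel₀ _ (two_ne_zero), exp_log (by positivity)]
    field_simp; ring
  refine ⟨_, ?_, fun s η χ S T hT hG he hc => S.twoA_aux (δ := δ) (β := β) (c2 := c2) hδ0 hβ hc2 e ?_ ?_ ?_ hT hG he hc⟩
  · rw [e]; have : 0 < δ / (2 * N + 1) := by positivity
    linarith
  · exact (min_le_left _ _).trans (min_le_left _ _)
  · exact (min_le_left _ _).trans (min_le_right _ _)
  · exact min_le_right _ _

end Shrinker

open Real Set

namespace Shrinker

lemma barrier_deriv {f f' : ℝ → ℝ} (hf : ∀ t, HasDerivAt f (f' t) t) {a b : ℝ} (ha : 0 < f a)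
    (h : ∀ t ∈ Ioc a b, f t = 0 → 0 < f' t) : ∀ t ∈ Icc a b, 0 < f t := by
  intro t ht
  by_contra hn
  have hc : Continuous f := continuous_iff_continuousAt.2 fun t => (hf t).continuousAt
  obtain ⟨u, hu, hu1, hu2⟩ := first_hit hc ht.1 ha (not_lt.1 hn)
  have hp := h u ⟨hu.1, hu.2.trans ht.2⟩ hu1
  have hg : HasDerivAt (fun x => - f (-x)) (f' u) (-u) := by
    have h1 : HasDerivAt f (f' u) (-(-u)) := by rw [neg_neg]; exact hf u
    have h2 := (h1.comp (-u) (hasDerivAt_neg (-u))).neg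
    refine h2.congr_deriv ?_
    ring
  obtain ⟨ε, hε, h3⟩ := pos_right hg (by rw [neg_neg, hu1, neg_zero]) hp
  set d := min ε (u - a) / 2 with hd
  have hua : 0 < u - a := by linarith [hu.1]
  have hm : 0 < min ε (u - a) := lt_min hε hua
  have l1 := min_le_left ε (u - a)
  have l2 := min_le_right ε (u - a)
  have h4 := h3 (-u + d) ⟨by linarith, by linarith⟩
  have h5 := hu2 (u - d) ⟨by linarith, by linarith⟩
  rw [show -(-u + d) = u - d by ring] at h4
  linarith

noncomputable def L (N : ℕ) (s : ℝ) : ℝ := exp (2 * s) / 2 - (2 * N + 1)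

lemma hr_L (N : ℕ) (s : ℝ) : (2 * N + 1) * hr N s = - L N s := by
  have : (2 * (N:ℝ) + 1) ≠ 0 := by positivity
  unfold hr L; field_simp; ring

lemma L_mono (N : ℕ) {a b : ℝ} (h : a ≤ b) : L N a ≤ L N b := by
  unfold L; gcongr

lemma A_anti (N : ℕ) {a b : ℝ} (hab : a ≤ b) (ha : 0 ≤ L N a) : A N b ≤ A N a := by
  have h1 : ∀ t ∈ Ioo a b, 0 ≤ -((2 * N + 1) * hr N t * A N t) := by
    intro t ht
    rw [hr_L]
    have := L_mono N ht.1.le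
    have := A_pos N t
    have : 0 ≤ L N t := by linarith
    have : 0 ≤ L N t * A N t := by positivity
    linarith
  have := mono_of (fun t => (A_deriv N t).neg) hab h1
  simp at this; exact this

lemma sin_ge_eta {x : ℝ} (h0 : 0 ≤ x) (h1 : x ≤ π / 4) : x ≤ sin (2 * x) := by
  have h := mul_le_sin (x := 2 * x) (by linarith) (by linarith)
  have : 2 / π * (2 * x) = (4 / π) * x := by ring
  have h4 : 1 ≤ 4 / π := by rw [le_div_iff₀ pi_pos]; linarith [pi_lt_four]
  nlinarith

lemma tan_small {x : ℝ} (h0 : 0 ≤ x) (h1 : x ≤ π / 8) :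
    sin (2 * x) ≤ 4 * x * cos (2 * x) ∧ sin (2 * x) ≤ cos (2 * x) := by
  have hπ := pi_pos
  have hc : cos (π/4) ≤ cos (2 * x) :=
    cos_le_cos_of_nonneg_of_le_pi (by linarith) (by linarith) (by linarith)
  have hs : sin (2 * x) ≤ sin (π/4) := sin_le_sin_of_le_of_le_pi_div_two (by linarith) (by linarith) (by linarith)
  have e : sin (π/4) = cos (π/4) := by rw [sin_pi_div_four, cos_pi_div_four]
  have h2 : (1/2 : ℝ) ≤ cos (π/4) := by
    rw [cos_pi_div_four]
    have : (1:ℝ) ≤ √2 := by rw [Real.one_le_sqrt]; norm_num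
    linarith
  refine ⟨?_, by linarith⟩
  have := sin_le (x := 2 * x) (by linarith)
  nlinarith

namespace Sol
variable {N : ℕ} {s1 : ℝ} {s η χ : ℝ → ℝ} (S : Sol N s1 s η χ)
include S

lemma dc' (t : ℝ) : HasDerivAt χ (-(L N (s t) * P (s t) * cos (2 * η t) * sin (χ t))
     + 2 * N * (P (s t) * sin (2 * η t) * cos (χ t))) t := by
  refine (S.dc t).congr_deriv ?_
  linear_combination (P (s t) * cos (2 * η t) * sin (χ t)) * hr_L N (s t)

lemma basics {T : ℝ} (hT : 0 < T) (hG : Good η χ T) (hχT : 0 < χ T) :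
    ∃ m ∈ Ioo 0 T, χ m = 0 ∧
    (∀ t ∈ Ioo 0 m, 0 < η t ∧ 0 < cos (χ t) ∧ sin (χ t) < 0 ∧ χ t < 0 ∧ -(π/2) < χ t) ∧
    (∀ t ∈ Ioo m T, 0 < η t ∧ 0 < cos (χ t) ∧ 0 ≤ sin (χ t)) ∧
    (∀ a b, 0 ≤ a → a ≤ b → b ≤ T → s b ≤ s a) ∧
    (∀ a b, 0 ≤ a → a ≤ b → b ≤ m → η a ≤ η b) ∧
    (∀ a b, m ≤ a → a ≤ b → b ≤ T → η b ≤ η a) := by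
  have hπ := pi_pos
  obtain ⟨m, hm, hm1, hm2, hm3⟩ := S.turn hT hG hχT
  have hcos : ∀ t ∈ Ioo 0 T, 0 < cos (χ t) := S.cos_pos' hG
  have hpre : ∀ t ∈ Ioo 0 m, 0 < η t ∧ 0 < cos (χ t) ∧ sin (χ t) < 0 ∧ χ t < 0 ∧ -(π/2) < χ t := by
    intro t ht
    have ht' : t ∈ Ioo 0 T := ⟨ht.1, ht.2.trans hm.2⟩
    have h2 := hm2 t ⟨ht.1.le, ht.2⟩
    exact ⟨(hG t ht').1, hcos t ht', sin_neg_of_neg_of_neg_pi_lt h2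
      (by linarith [S.lemA hG t ht']), h2, S.lemA hG t ht'⟩
  have hpost : ∀ t ∈ Ioo m T, 0 < η t ∧ 0 < cos (χ t) ∧ 0 ≤ sin (χ t) := by
    intro t ht
    have ht' : t ∈ Ioo 0 T := ⟨hm.1.trans ht.1, ht.2⟩
    exact ⟨(hG t ht').1, hcos t ht', sin_nonneg_of_nonneg_of_le_pi (hm3 t (Ioo_subset_Icc_self ht))
      (by linarith [(hG t ht').2])⟩
  refine ⟨m, hm, hm1, hpre, hpost, fun a b h1 h2 h3 =>
    S.s_anti h2 (fun t ht => (hcos t ⟨by linarith [ht.1], by linarith [ht.2]⟩).le), fun a b h1 h2 h3 =>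
    S.e_mono h2 (fun t ht => (hpre t ⟨by linarith [ht.1], by linarith [ht.2]⟩).2.2.1.le), fun a b h1 h2 h3 =>
    S.e_anti h2 (fun t ht => (hpost t ⟨by linarith [ht.1], by linarith [ht.2]⟩).2.2)⟩

/-- Step 1 -/
lemma step1 {t S0 : ℝ} (ht : 0 ≤ t)
    (h : ∀ u ∈ Ioo 0 t, 0 < η u ∧ 0 < cos (χ u) ∧ sin (χ u) < 0) (hs : ∀ u ∈ Ioo 0 t, S0 ≤ s u)
    (hL : 0 < L N S0) (hc : χ t ≤ 0) : η t ≤ π / (2 * L N S0) := by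
  have := mono_of (f := fun t => χ t - L N S0 * η t)
    (fun t => (S.dc' t).sub ((S.de t).const_mul _)) ht (fun u hu => by
      obtain ⟨k1, k2, k3⟩ := h u hu
      have h1 := L_mono N (hs u hu)
      have hP := P_pos (s u); have hC := S.C_pos u; have hS := S.S_pos k1
      have h2 : 0 ≤ (L N (s u) - L N S0) * (P (s u) * cos (2 * η u) * (-sin (χ u))) := by
        have : 0 ≤ -sin (χ u) := by linarith
        have : 0 ≤ L N (s u) - L N S0 := by linarith
        positivity
      have h3 : 0 ≤ 2 * N * (P (s u) * sin (2 * η u) * cos (χ u)) := by positivity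
      nlinarith)
  simp only [S.e0, S.c0] at this
  rw [le_div_iff₀ (by positivity)]
  linarith

set_option maxHeartbeats 1000000 in
/-- Step 2 -/
lemma step2 {S0 m : ℝ} (hL : 4 ≤ L N S0) (hs1 : S0 + 2 < s1) (hs1p : 0 ≤ s1)
    (hA : A N s1 * exp (2 * s1) < A N (S0 + 2) / 2)
    (hm : 0 < m) (hχm : χ m = 0)
    (hpre : ∀ t ∈ Ioo 0 m, 0 < η t ∧ 0 < cos (χ t) ∧ sin (χ t) < 0 ∧ χ t < 0 ∧ -(π/2) < χ t) :
    S0 + 1 ≤ s m := by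
  by_contra hn
  push Not at hn
  have hπ := pi_pos
  have hsan : ∀ a b, 0 ≤ a → a ≤ b → b ≤ m → s b ≤ s a := fun a b h1 h2 h3 =>
    S.s_anti h2 (fun t ht => (hpre t ⟨by linarith [ht.1], by linarith [ht.2]⟩).2.1.le)
  have heup : ∀ a b, 0 ≤ a → a ≤ b → b ≤ m → η a ≤ η b := fun a b h1 h2 h3 =>
    S.e_mono h2 (fun t ht => (hpre t ⟨by linarith [ht.1], by linarith [ht.2]⟩).2.2.1.le)
  obtain ⟨tb, htb, hb1, hb2⟩ := first_hit S.cs (c := S0 + 1) hm.le (by rw [S.s0]; linarith) hn.le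
  have htbm : tb < m := lt_of_le_of_ne htb.2 (by rintro rfl; linarith)
  obtain ⟨ta, hta, ha1, ha2⟩ := first_hit S.cs (c := S0 + 2) htb.1.le (by rw [S.s0]; linarith) (by linarith)
  have htab : ta < tb := lt_of_le_of_ne hta.2 (by rintro rfl; linarith)
  have hη : ∀ t ∈ Ioc 0 tb, η t ≤ π / 8 := by
    intro t ht
    have h1 := S.step1 (t := t) (S0 := S0) ht.1.le (fun u hu => by
      obtain ⟨k1, k2, k3, -, -⟩ := hpre u ⟨hu.1, by linarith [hu.2, ht.2]⟩
      exact ⟨k1, k2, k3⟩) (fun u hu => by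
        have := hb2 u ⟨hu.1.le, by linarith [hu.2, ht.2]⟩; linarith) (by linarith)
        (hpre t ⟨ht.1, by linarith [ht.2]⟩).2.2.2.1.le
    refine h1.trans ?_
    gcongr; linarith
  have hAw := A_pos N (S0 + 2)
  have hA1 := A_pos N s1
  have hexp : 1 ≤ exp (2 * s1) := one_le_exp (by linarith)
  have hA2 : A N s1 < A N (S0 + 2) / 2 := by nlinarith
  have hL1 : 0 ≤ L N (S0 + 1) := by have := L_mono N (by linarith : S0 ≤ S0 + 1); linarith
  have hM0 : ∀ t, 0 ≤ t → t ≤ m → - A N s1 ≤ Mf N s χ t := by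
    intro t h1 h2
    have := S.M_mono h1 (fun u hu => (hpre u ⟨hu.1, by linarith [hu.2]⟩).1.le)
    simpa [Mf, S.s0, S.c0] using this
  have hwin : ∀ t ∈ Icc ta tb, A N (S0 + 2) ≤ A N (s t) ∧ -(1/2) ≤ sin (χ t) := by
    intro t ht
    have t0 : 0 < t := hta.1.trans_le ht.1
    have tm : t < m := ht.2.trans_lt htbm
    have l1 : s t ≤ S0 + 2 := by rw [← ha1]; exact hsan ta t hta.1.le ht.1 tm.le
    have l2 : S0 + 1 ≤ s t := by rw [← hb1]; exact hsan t tb t0.le ht.2 htbm.le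
    have h1 : A N (S0 + 2) ≤ A N (s t) := A_anti N l1 (by have := L_mono N l2; linarith)
    refine ⟨h1, ?_⟩
    have h2 := hM0 t t0.le tm.le
    unfold Mf at h2
    by_contra hc
    push Not at hc
    have : A N (s t) * sin (χ t) ≤ A N (s t) * (-(1/2)) := by
      have := A_pos N (s t); gcongr
    linarith
  -- time tc
  have hχa : -(π/4) < χ ta := by
    have h1 := (hwin ta ⟨le_rfl, htab.le⟩).2
    by_contra hc
    push Not at hc
    have h2 := (hpre ta ⟨hta.1, by linarith⟩).2.2.2.2
    have h3 : sin (χ ta) ≤ sin (-(π/4)) := sin_le_sin_of_le_of_le_pi_div_two (by linarith) (by linarith) hc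
    rw [sin_neg, sin_pi_div_four] at h3
    have : (1:ℝ) < √2 := by rw [Real.lt_sqrt] <;> norm_num
    linarith
  obtain ⟨tc, htc, hc1, hc2⟩ := first_hit' S.cc (c := -(π/4)) hta.1.le (by rw [S.c0]; linarith) hχa.le
  have hηc : exp (-(2 * s1)) ≤ η tc := by
    have := mono_of (f := fun t => (L N s1 + 2 * N) * η t - χ t)
      (fun t => ((S.de t).const_mul _).sub (S.dc' t)) htc.1.le (fun u hu => by
        have hum : u ∈ Ioo 0 m := ⟨hu.1, by linarith [hu.2, htc.2]⟩
        obtain ⟨k1, k2, k3, k4, k5⟩ := hpre u hum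
        have h1 : s u ≤ s1 := by have := hsan 0 u le_rfl hu.1.le hum.2.le; rwa [S.s0] at this
        have h1' := L_mono N h1
        have hP := P_pos (s u); have hC := S.C_pos u; have hS := S.S_pos k1
        have h2 := (tan_small k1.le (hη u ⟨hu.1, by linarith [hu.2, htc.2]⟩)).2
        have h3 : cos (χ u) ≤ - sin (χ u) := by
          have h4 := hc2 u ⟨hu.1.le, hu.2⟩
          have h5 : cos (-χ u) ≤ cos (π/4) := cos_le_cos_of_nonneg_of_le_pi (by linarith) (by linarith) (by linarith)
          have h6 : sin (π/4) ≤ sin (-χ u) := sin_le_sin_of_le_of_le_pi_div_two (by linarith) (by linarith) (by linarith)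
          rw [cos_neg] at h5; rw [sin_neg] at h6
          have e : sin (π/4) = cos (π/4) := by rw [sin_pi_div_four, cos_pi_div_four]
          linarith
        have h7 : sin (2 * η u) * cos (χ u) ≤ cos (2 * η u) * (-sin (χ u)) := by gcongr
        have h8 : 0 ≤ (L N s1 - L N (s u)) * (P (s u) * cos (2 * η u) * (-sin (χ u))) := by
          have : 0 ≤ -sin (χ u) := by linarith
          have : 0 ≤ L N s1 - L N (s u) := by linarith
          positivity
        have h9 : 0 ≤ 2 * N * P (s u) * (cos (2 * η u) * (-sin (χ u)) - sin (2 * η u) * cos (χ u)) := by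
          have : 0 ≤ cos (2 * η u) * (-sin (χ u)) - sin (2 * η u) * cos (χ u) := by linarith
          positivity
        nlinarith)
    simp only [S.e0, S.c0, hc1] at this
    have e1 : L N s1 + 2 * N ≤ exp (2 * s1) / 2 := by unfold L; linarith
    have p0 : 0 ≤ η tc := by have := heup 0 tc le_rfl htc.1.le (by linarith [htc.2]); rwa [S.e0] at this
    have e2 : (L N s1 + 2 * N) * η tc ≤ exp (2 * s1) / 2 * η tc := by gcongr
    have e3 : 1 ≤ exp (2 * s1) * η tc := by linarith [pi_gt_three]
    rw [exp_neg, inv_le_iff_one_le_mul₀ (exp_pos _)]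
    linarith
  have hN : (1:ℝ) ≤ N := by exact_mod_cast S.hN
  have hfin : A N (S0 + 2) * exp (-(2 * s1)) ≤ Mf N s χ tb - Mf N s χ ta := by
    have := mono_of (f := fun t => Mf N s χ t + A N (S0 + 2) * exp (-(2 * s1)) * s t)
      (fun t => (S.dM t).add ((S.ds t).const_mul _)) htab.le (fun u hu => by
        have hum : u ∈ Ioo 0 m := ⟨by linarith [hu.1, hta.1], by linarith [hu.2, htbm]⟩
        obtain ⟨k1, k2, k3, k4, k5⟩ := hpre u hum
        obtain ⟨w1, w2⟩ := hwin u ⟨hu.1.le, hu.2.le⟩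
        have hP := P_pos (s u); have hC := S.C_pos u; have hS := S.S_pos k1
        have hc : 1/2 ≤ cos (χ u) := by
          have := sin_sq_add_cos_sq (χ u)
          nlinarith
        have hS2 : exp (-(2 * s1)) ≤ sin (2 * η u) := by
          refine (hηc.trans (heup tc u htc.1.le (by linarith [htc.2, hu.1]) hum.2.le)).trans (sin_ge_eta k1.le ?_)
          exact (abs_lt.1 (S.e_lt u)).2.le
        have hE := exp_pos (-(2 * s1))
        have h1 : A N (S0 + 2) * exp (-(2 * s1)) ≤ A N (s u) * sin (2 * η u) := by
          have := A_pos N (s u); gcongr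
        have h2 : cos (2 * η u) * cos (χ u) ≤ 2 * N * cos (χ u) ^ 2 := by
          calc cos (2 * η u) * cos (χ u) ≤ 1 * cos (χ u) := by gcongr; exact S.C_le u
            _ ≤ 2 * 1 * cos (χ u) ^ 2 := by nlinarith
            _ ≤ _ := by gcongr
        have h3 : A N (S0 + 2) * exp (-(2 * s1)) * (cos (2 * η u) * cos (χ u)) ≤ A N (s u) * sin (2 * η u) * (2 * N * cos (χ u) ^ 2) := by
          have := A_pos N (s u); gcongr
        nlinarith [mul_le_mul_of_nonneg_left h3 hP.le])
    simp only [ha1, hb1] at this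
    linarith
  have h1 := hM0 ta hta.1.le (by linarith)
  have h2 : Mf N s χ tb ≤ 0 := mul_nonpos_of_nonneg_of_nonpos (A_pos _ _).le
    (hpre tb ⟨htb.1, htbm⟩).2.2.1.le
  have h3 : A N (S0 + 2) * exp (-(2 * s1)) ≤ A N s1 := by linarith
  have h4 := mul_le_mul_of_nonneg_right h3 (exp_pos (2 * s1)).le
  rw [mul_assoc, ← exp_add, neg_add_cancel, exp_zero] at h4
  linarith

end Sol
end Shrinker

open Real Set

namespace Shrinker
namespace Sol
variable {N : ℕ} {s1 : ℝ} {s η χ : ℝ → ℝ} (S : Sol N s1 s η χ)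
include S

set_option maxHeartbeats 4000000 in
lemma twoB_aux {S0 Sf c3 Q a0 : ℝ} (hSf : exp (2 * Sf) = 64 * (2 * N + 1))
    (hSS : Sf ≤ S0) (hc3 : c3 = N * A N (Sf + 1) / 2)
    (hQ : Q = (2 * N + 1) / c3 + exp (-((2 * N + 1) * Sf)))
    (ha0 : a0 = 1 / Q * exp (-(exp (2 * Sf) / 4)))
    (hs1 : S0 + 2 < s1) (hs1p : 0 ≤ s1) (hA : A N s1 * exp (2 * s1) < A N (S0 + 2) / 2)
    (hsm : π / (2 * L N S0) * (40 * N * exp ((2 * N + 1) * Sf)) < a0)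
    {T : ℝ} (hT : 0 < T) (hG : Good η χ T) (hc : χ T = π / 2) : False := by
  have hπ := pi_pos
  have hN : (1:ℝ) ≤ N := by exact_mod_cast S.hN
  have hκ : (0:ℝ) < 2 * N + 1 := by positivity
  have hc30 : 0 < c3 := by rw [hc3]; have := A_pos N (Sf + 1); positivity
  have hQ0 : 0 < Q := by rw [hQ]; positivity
  have hLf : ∀ x, Sf ≤ x → exp (2 * x) / 4 ≤ L N x ∧ 64 * (2 * N + 1) ≤ exp (2 * x) := by
    intro x hx
    have h1 : exp (2 * Sf) ≤ exp (2 * x) := by gcongr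
    refine ⟨?_, by linarith⟩
    unfold L; linarith
  have hL0 : 4 ≤ L N S0 := by have := hLf S0 hSS; linarith
  obtain ⟨m, hm, hm1, hpre, hpost, hsan, heup, hedn⟩ := S.basics hT hG (by rw [hc]; positivity)
  have hsm1 : S0 + 1 ≤ s m := S.step2 hL0 hs1 hs1p hA hm.1 hm1 hpre
  have hηm : η m ≤ π / (2 * L N S0) := S.step1 hm.1.le (fun u hu => by
      obtain ⟨k1, k2, k3, -, -⟩ := hpre u hu
      exact ⟨k1, k2, k3⟩) (fun u hu => by
        have := hsan u m hu.1.le hu.2.le hm.2.le; linarith) (by linarith) hm1.le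
  set e := η m with he
  have he8 : e ≤ π / 8 := by
    refine hηm.trans ?_
    gcongr; linarith
  have he0 : 0 < e := (hG m hm).1
  have he1 : e < 1 := by linarith [pi_lt_four]
  have hsT : s T < Sf := by
    have h1 := S.E1 hT hG hc
    by_contra hn
    push Not at hn
    have h2 := hr_L N (s T)
    have h3 := (hLf _ hn).1
    have := exp_pos (2 * s T)
    have : 0 < (2 * N + 1) * hr N (s T) := by positivity
    linarith
  obtain ⟨td, htd, hd1, hd2⟩ := first_hit S.cs (c := Sf) hm.2.le (by linarith) hsT.le
  have htdT : td < T := lt_of_le_of_ne htd.2 (by rintro rfl; linarith)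
  set k := 32 * N * e with hk
  have hk0 : 0 < k := by positivity
  have hSle : ∀ t ∈ Icc m td, Sf ≤ s t := by
    intro t ht; rw [← hd1]; exact hsan t td (by linarith [ht.1, hm.1]) ht.2 htd.2
  have dexp : ∀ (b t : ℝ), HasDerivAt (fun t => exp (b * s t))
      (-(b * exp (b * s t) * (P (s t) * cos (2 * η t) * cos (χ t)))) t := by
    intro b t
    have := ((S.ds t).const_mul b).exp
    exact this.congr_deriv (by ring)
  have hηle : ∀ t, m ≤ t → t ≤ T → η t ≤ e := fun t h1 h2 => hedn m t le_rfl h1 h2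
  -- step 3
  have hZ : ∀ t ∈ Icc m td, 0 < k * exp (-2 * s t) - sin (χ t) := by
    refine barrier_deriv (f := fun t => k * exp (-2 * s t) - sin (χ t))
      (fun t => ((dexp (-2) t).const_mul k).sub (S.dc' t).sin) ?_ ?_
    · rw [hm1, sin_zero, sub_zero]; positivity
    · intro t ht h0
      have htT : t ∈ Ioo m T := ⟨ht.1, ht.2.trans_lt htdT⟩
      obtain ⟨k1, k2, k3⟩ := hpost t htT
      have hP := P_pos (s t); have hC := S.C_pos t; have hS := S.S_pos k1
      have h0' : sin (χ t) = k * exp (-2 * s t) := by linarith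
      obtain ⟨l1, l2⟩ := hLf (s t) (hSle t ⟨ht.1.le, ht.2⟩)
      have h1 := (tan_small k1.le ((hηle t htT.1.le htT.2.le).trans he8)).1
      have h2 := hηle t htT.1.le htT.2.le
      have hX : exp (-2 * s t) * exp (2 * s t) = 1 := by rw [← exp_add]; simp
      have hE := exp_pos (-2 * s t)
      have h3 : k / 4 ≤ k * exp (-2 * s t) * L N (s t) := by
        have := mul_le_mul_of_nonneg_left l1 (by positivity : 0 ≤ k * exp (-2 * s t))
        nlinarith
      have h4 : 2 * N * (sin (2 * η t) * cos (χ t)) ≤ k / 4 * cos (2 * η t) := by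
        have : sin (2 * η t) * cos (χ t) ≤ 4 * e * cos (2 * η t) := by
          calc sin (2 * η t) * cos (χ t) ≤ sin (2 * η t) * 1 := by gcongr; exact cos_le_one _
            _ ≤ 4 * η t * cos (2 * η t) := by linarith
            _ ≤ _ := by gcongr
        calc _ ≤ 2 * N * (4 * e * cos (2 * η t)) := by gcongr
          _ = _ := by rw [hk]; ring
      have h5 : 0 < k * exp (-2 * s t) * cos (2 * η t) := by positivity
      have h6 : k / 4 * cos (2 * η t) ≤ k * exp (-2 * s t) * L N (s t) * cos (2 * η t) := by gcongr
      have h7 : 0 < P (s t) * cos (χ t) := by positivity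
      rw [h0']
      have : 0 < P (s t) * cos (χ t) * (2 * (k * exp (-2 * s t) * cos (2 * η t)) + k * exp (-2 * s t) * L N (s t) * cos (2 * η t) - 2 * N * (sin (2 * η t) * cos (χ t))) := by
        apply mul_pos h7; linarith
      linarith
  have hexs : ∀ t ∈ Icc m td, k * exp (-2 * s t) ≤ e / 4 := by
    intro t ht
    obtain ⟨l1, l2⟩ := hLf (s t) (hSle t ht)
    have hX : exp (-2 * s t) * exp (2 * s t) = 1 := by rw [← exp_add]; simp
    have hE := exp_pos (-2 * s t)
    have : exp (-2 * s t) * (64 * (2 * N + 1)) ≤ 1 := (mul_le_mul_of_nonneg_left l2 hE.le).trans hX.le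
    have h2 : 128 * N * exp (-2 * s t) ≤ 1 := by nlinarith
    rw [hk]; nlinarith
  have hcge : ∀ t ∈ Ioo m td, 1/2 ≤ cos (χ t) := by
    intro t ht
    obtain ⟨k1, k2, k3⟩ := hpost t ⟨ht.1, ht.2.trans htdT⟩
    have h1 := hZ t (Ioo_subset_Icc_self ht)
    have h2 := hexs t (Ioo_subset_Icc_self ht)
    have := sin_sq_add_cos_sq (χ t)
    nlinarith
  have hηge : ∀ t ∈ Icc m td, e / 2 ≤ η t := by
    intro t ht
    have := mono_of (f := fun t => η t + k * exp (-2 * s t))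
      (fun t => (S.de t).add ((dexp (-2) t).const_mul k)) ht.1 (fun u hu => by
        have hu' : u ∈ Ioo m td := ⟨hu.1, hu.2.trans_le ht.2⟩
        have h1 := hcge u hu'
        have h2 := hZ u (Ioo_subset_Icc_self hu')
        have hP := P_pos (s u); have hC := S.C_pos u
        have hE := exp_pos (-2 * s u)
        have h3 : k * exp (-2 * s u) ≤ 2 * k * exp (-2 * s u) * cos (χ u) := by
          have : 0 < k * exp (-2 * s u) := by positivity
          nlinarith
        have h4 : 0 < P (s u) * cos (2 * η u) := by positivity
        nlinarith)
    have h2 := hexs t ht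
    have h3 : 0 < k * exp (-2 * s m) := by positivity
    linarith
  -- step 4
  obtain ⟨tw, htw, hw1⟩ : ∃ tw ∈ Icc m td, s tw = Sf + 1 := by
    have := intermediate_value_Icc' htd.1.le S.cs.continuousOn (show Sf + 1 ∈ Icc (s td) (s m) from ⟨by linarith, by linarith⟩)
    exact this
  have hLf0 : 0 ≤ L N Sf := by have := hLf Sf le_rfl; linarith
  have hMd : c3 * e ≤ Mf N s χ td := by
    have := mono_of (f := fun t => Mf N s χ t + c3 * e * s t)
      (fun t => (S.dM t).add ((S.ds t).const_mul _)) htw.2 (fun u hu => by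
        have hu' : u ∈ Ioo m td := ⟨htw.1.trans_lt hu.1, hu.2⟩
        obtain ⟨k1, k2, k3⟩ := hpost u ⟨hu'.1, hu'.2.trans htdT⟩
        have h1 := hcge u hu'
        have h2 := hηge u (Ioo_subset_Icc_self hu')
        have hP := P_pos (s u); have hC := S.C_pos u
        have h3 : e / 2 ≤ sin (2 * η u) := h2.trans (sin_ge_eta k1.le (abs_lt.1 (S.e_lt u)).2.le)
        have h4 : A N (Sf + 1) ≤ A N (s u) := by
          apply A_anti
          · rw [← hw1]; exact hsan tw u (by linarith [htw.1, hm.1]) hu.1.le (by linarith [hu.2])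
          · have := L_mono N (hSle u (Ioo_subset_Icc_self hu')); linarith
        have hA0 := A_pos N (Sf + 1)
        have h5 : A N (Sf + 1) * (e / 2) ≤ A N (s u) * sin (2 * η u) := by
          have := A_pos N (s u); gcongr
        have h6 : cos (2 * η u) * cos (χ u) ≤ 2 * cos (χ u) ^ 2 := by
          calc cos (2 * η u) * cos (χ u) ≤ 1 * cos (χ u) := by gcongr; exact S.C_le u
            _ ≤ 2 * cos (χ u) ^ 2 := by nlinarith
        have h7 : A N (Sf + 1) * (e / 2) * (cos (2 * η u) * cos (χ u)) ≤ A N (s u) * sin (2 * η u) * (2 * cos (χ u) ^ 2) := by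
          have := A_pos N (s u); have := S.S_pos k1; gcongr
        rw [hc3]
        have h8 : 0 ≤ N * P (s u) := by positivity
        nlinarith [mul_le_mul_of_nonneg_left h7 h8])
    simp only [hd1, hw1] at this
    have h2 : 0 ≤ Mf N s χ tw := by
      have := S.M_mono htw.1 (fun u hu => (hpost u ⟨hu.1, by linarith [hu.2, htw.2]⟩).1.le)
      simpa [Mf, hm1] using this
    linarith
  -- step 5
  have hT0 : 0 ≤ η T := left_ge S.ce hT (fun u hu => (hG u hu).1.le)
  have h5 : exp (-((2 * N + 1) * s T)) ≤ Q := by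
    have := mono_of (f := fun t => -(η t + c3 * e / (2 * N + 1) * exp (-(2 * N + 1) * s t)))
      (fun t => ((S.de t).add ((dexp (-(2 * N + 1)) t).const_mul _)).neg) htd.2 (fun u hu => by
        obtain ⟨k1, k2, k3⟩ := hpost u ⟨htd.1.trans hu.1, hu.2⟩
        have hP := P_pos (s u); have hC := S.C_pos u
        have hE := exp_pos (-(2 * N + 1) * s u)
        have h1 : c3 * e ≤ A N (s u) * sin (χ u) := hMd.trans (S.M_mono hu.1.le (fun v hv => (hpost v ⟨htd.1.trans hv.1, hv.2.trans hu.2⟩).1.le))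
        have h2 := A_le N (le_refl (s u))
        have h3 : c3 * e ≤ exp ((2 * N + 1) * s u) * sin (χ u) := h1.trans (by gcongr)
        have hX : exp (-(2 * N + 1) * s u) * exp ((2 * N + 1) * s u) = 1 := by
          rw [← exp_add, show -(2 * (N:ℝ) + 1) * s u + (2 * N + 1) * s u = 0 by ring, exp_zero]
        have h4 : c3 * e * exp (-(2 * N + 1) * s u) ≤ sin (χ u) := by
          have := mul_le_mul_of_nonneg_left h3 hE.le
          have e' : exp (-(2 * N + 1) * s u) * (exp ((2 * N + 1) * s u) * sin (χ u)) = sin (χ u) := by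
            rw [← mul_assoc, hX, one_mul]
          rw [e'] at this; linarith
        have h6 : c3 * e * exp (-(2 * N + 1) * s u) * cos (χ u) ≤ sin (χ u) :=
          (mul_le_of_le_one_right (by positivity) (cos_le_one _)).trans h4
        have h7 : 0 < P (s u) * cos (2 * η u) := by positivity
        have e1 : c3 * e / (2 * N + 1) * (2 * N + 1) = c3 * e := by field_simp
        have e2 : c3 * e / (2 * N + 1) * -(-(2 * ↑N + 1) * exp (-(2 * N + 1) * s u) * (P (s u) * cos (2 * η u) * cos (χ u))) = P (s u) * cos (2 * η u) * (c3 * e * exp (-(2 * N + 1) * s u) * cos (χ u)) := by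
          linear_combination (exp (-(2 * N + 1) * s u) * (P (s u) * cos (2 * η u) * cos (χ u))) * e1
        rw [e2]
        nlinarith [mul_le_mul_of_nonneg_left h6 h7.le])
    simp only [hd1] at this
    have h2 := hηle td htd.1.le htd.2
    have h3 : c3 * e / (2 * N + 1) * exp (-(2 * N + 1) * s T) ≤ e + c3 * e / (2 * N + 1) * exp (-(2 * N + 1) * Sf) := by
      linarith
    have h4 : e + c3 * e / (2 * N + 1) * exp (-(2 * N + 1) * Sf) = c3 * e / (2 * N + 1) * Q := by
      rw [hQ, neg_mul]; field_simp
    rw [h4] at h3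
    have := le_of_mul_le_mul_left h3 (by positivity)
    rwa [neg_mul] at this
  have hAT : a0 ≤ A N (s T) := by
    rw [ha0]
    have e1 : A N (s T) = exp ((2 * N + 1) * s T) * exp (-(exp (2 * s T) / 4)) := by
      unfold A; rw [← exp_add]; congr 1
    rw [e1]
    have h1 : 1 / Q ≤ exp ((2 * N + 1) * s T) := by
      rw [div_le_iff₀ hQ0]
      have : exp ((2 * N + 1) * s T) * exp (-((2 * N + 1) * s T)) = 1 := by rw [← exp_add]; simp
      exact this.symm.le.trans (mul_le_mul_of_nonneg_left (by assumption) (exp_pos _).le)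
    gcongr
  -- step 6
  have h6 : Mf N s χ T ≤ Mf N s χ td + 8 * N * e / (2 * N + 1) * exp ((2 * N + 1) * Sf) := by
    have := mono_of (f := fun t => -(Mf N s χ t + 8 * N * e / (2 * N + 1) * exp ((2 * N + 1) * s t)))
      (fun t => ((S.dM t).add ((dexp (2 * N + 1) t).const_mul _)).neg) htd.2 (fun u hu => by
        have huT : u ∈ Ioo m T := ⟨htd.1.trans hu.1, hu.2⟩
        obtain ⟨k1, k2, k3⟩ := hpost u huT
        have hP := P_pos (s u); have hC := S.C_pos u; have hS := S.S_pos k1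
        have hE := exp_pos ((2 * N + 1) * s u)
        have h1 := (tan_small k1.le ((hηle u huT.1.le huT.2.le).trans he8)).1
        have h2 := hηle u huT.1.le huT.2.le
        have h3 : sin (2 * η u) * cos (χ u) ≤ 4 * e * cos (2 * η u) := by
          calc sin (2 * η u) * cos (χ u) ≤ sin (2 * η u) * 1 := by gcongr; exact cos_le_one _
            _ ≤ 4 * η u * cos (2 * η u) := by linarith
            _ ≤ _ := by gcongr
        have h4 : A N (s u) * (sin (2 * η u) * cos (χ u)) ≤ exp ((2 * N + 1) * s u) * (4 * e * cos (2 * η u)) := by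
          have := A_le N (le_refl (s u)); gcongr
        have e1 : 8 * N * e / (2 * N + 1) * (2 * N + 1) = 8 * N * e := by field_simp
        have e2 : 8 * N * e / (2 * N + 1) * -((2 * ↑N + 1) * exp ((2 * N + 1) * s u) * (P (s u) * cos (2 * η u) * cos (χ u))) = - (8 * N * e * exp ((2 * N + 1) * s u) * (P (s u) * cos (2 * η u) * cos (χ u))) := by
          linear_combination (-exp ((2 * N + 1) * s u) * (P (s u) * cos (2 * η u) * cos (χ u))) * e1
        rw [e2]
        have h8 : 0 ≤ 2 * N * P (s u) * cos (χ u) := by positivity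
        nlinarith [mul_le_mul_of_nonneg_left h4 h8])
    simp only [hd1] at this
    have : 0 < 8 * N * e / (2 * N + 1) * exp ((2 * N + 1) * s T) := by positivity
    linarith
  have h7 : Mf N s χ T = A N (s T) := by simp [Mf, hc]
  have h8 : Mf N s χ td ≤ 32 * N * e * exp ((2 * N + 1) * Sf) := by
    unfold Mf
    have h1 := hZ td ⟨htd.1.le, le_rfl⟩
    have h2 := A_le N hd1.le
    have h3 : exp (-2 * s td) ≤ 1 := by
      obtain ⟨l1, l2⟩ := hLf (s td) hd1.ge
      have hX : exp (-2 * s td) * exp (2 * s td) = 1 := by rw [← exp_add]; simp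
      have hE := exp_pos (-2 * s td)
      nlinarith
    have h4 : sin (χ td) ≤ k := by nlinarith
    have h5 := A_pos N (s td)
    calc A N (s td) * sin (χ td) ≤ A N (s td) * k := by gcongr
      _ ≤ exp ((2 * N + 1) * Sf) * k := by gcongr
      _ = _ := by rw [hk]; ring
  have h9 : 8 * N * e / (2 * N + 1) ≤ 8 * N * e := by
    apply div_le_self (by positivity); linarith
  have hE := exp_pos ((2 * N + 1) * Sf)
  have h10 : a0 ≤ e * (40 * N * exp ((2 * N + 1) * Sf)) := by
    have := mul_le_mul_of_nonneg_right h9 hE.le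
    linarith
  have h11 : e * (40 * N * exp ((2 * N + 1) * Sf)) ≤ π / (2 * L N S0) * (40 * N * exp ((2 * N + 1) * Sf)) := by
    gcongr
  linarith

end Sol

theorem twoB (N : ℕ) (hN : 1 ≤ N) : ∃ s1, hr N s1 < 0 ∧ ∀ s η χ, Sol N s1 s η χ → ∀ T > 0, Good η χ T →
    χ T = π / 2 → False := by
  have hN' : (1:ℝ) ≤ N := by exact_mod_cast hN
  have hκ : (0:ℝ) < 2 * N + 1 := by positivity
  have hπ := pi_pos
  obtain ⟨Sf, hSf⟩ : ∃ Sf, exp (2 * Sf) = 64 * (2 * (N:ℝ) + 1) := by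
    refine ⟨log (64 * (2 * (N:ℝ) + 1)) / 2, ?_⟩
    rw [mul_div_cancel₀ _ (two_ne_zero), exp_log (by positivity)]
  have hAf := A_pos N (Sf + 1)
  set c3 := N * A N (Sf + 1) / 2 with hc3
  have hc30 : 0 < c3 := by positivity
  set Q := (2 * N + 1) / c3 + exp (-((2 * N + 1) * Sf)) with hQ
  have hQ0 : 0 < Q := by positivity
  set a0 := 1 / Q * exp (-(exp (2 * Sf) / 4)) with ha0
  have ha00 : 0 < a0 := by positivity
  set B := 40 * N * exp ((2 * N + 1) * Sf) with hB
  have hB0 : 0 < B := by positivity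
  obtain ⟨S0, hS1, hS2⟩ : ∃ S0, Sf ≤ S0 ∧ π * B / a0 < S0 := ⟨max Sf (π * B / a0 + 1), le_max_left _ _,
    lt_of_lt_of_le (by linarith) (le_max_right _ _)⟩
  have hS0p : 0 < S0 := lt_of_le_of_lt (by positivity) hS2
  have hexpf : exp (2 * Sf) ≤ exp (2 * S0) := by gcongr
  have hL : S0 / 2 ≤ L N S0 := by
    unfold L
    have := add_one_le_exp (2 * S0)
    linarith
  have hL0 : 0 < L N S0 := by linarith
  have hsm : π / (2 * L N S0) * B < a0 := by
    have h1 : π / (2 * L N S0) ≤ π / S0 := by gcongr; linarith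
    have h2 : π / S0 * B < a0 := by
      rw [div_lt_iff₀ ha00] at hS2
      rw [div_mul_eq_mul_div, div_lt_iff₀ hS0p]; linarith
    have h3 : π / (2 * L N S0) * B ≤ π / S0 * B := by gcongr
    linarith
  have hAS := A_pos N (S0 + 2)
  set z := A N (S0 + 2) / 2 with hz
  have hz0 : 0 < z := by positivity
  obtain ⟨s1, k1, k2, k3⟩ : ∃ s1, S0 + 2 < s1 ∧ 2 * (2 * N + 1 + 3) ≤ s1 ∧ - log z < s1 :=
    ⟨max (S0 + 3) (max (2 * (2 * N + 1 + 3)) (- log z + 1)), lt_of_lt_of_le (by linarith) (le_max_left _ _),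
      (le_max_left _ _).trans (le_max_right _ _), lt_of_lt_of_le (by linarith) ((le_max_right _ _).trans (le_max_right _ _))⟩
  have hs1p : 0 ≤ s1 := by linarith
  have hA : A N s1 * exp (2 * s1) < z := by
    unfold A
    rw [← exp_add, ← exp_log hz0]
    apply exp_lt_exp.2
    have h1 := quadratic_le_exp_of_nonneg (by linarith : 0 ≤ 2 * s1)
    nlinarith
  refine ⟨s1, ?_, fun s η χ S T hT hG hc => S.twoB_aux hSf hS1 hc3 hQ ha0 k1 hs1p hA hsm hT hG hc⟩
  have h1 := hr_L N s1
  have h2 := L_mono N (by linarith : S0 ≤ s1)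
  by_contra hn
  push Not at hn
  have : 0 ≤ (2 * N + 1) * hr N s1 := by positivity
  linarith

end Shrinker

open Real Set

namespace Shrinker

lemma exists_flow (N : ℕ) : ∃ Φ : ℝ → ℝ → ℝ × ℝ × ℝ, (∀ a, Φ a 0 = (a, 0, -(π/2))) ∧
    (∀ a t, HasDerivAt (Φ a) (V N (Φ a t)) t) := by
  have := fun a : ℝ => exists_global (V N) _ _ (V_lip N) (V_bound N) (a, 0, -(π/2))
  choose Φ h1 h2 using this
  exact ⟨Φ, h1, h2⟩

lemma flow_cont (N : ℕ) {Φ : ℝ → ℝ → ℝ × ℝ × ℝ} (h0 : ∀ a, Φ a 0 = (a, 0, -(π/2)))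
    (hd : ∀ a t, HasDerivAt (Φ a) (V N (Φ a t)) t) :
    Continuous (fun p : ℝ × ℝ => Φ p.1 |p.2|) := by
  have hc : ∀ a, Continuous (Φ a) := fun a => continuous_iff_continuousAt.2 fun t => (hd a t).continuousAt
  have key : ∀ a b t, dist (Φ a |t|) (Φ b |t|) ≤ dist a b * exp (((20*N+20 : NNReal) : ℝ) * |t|) := by
    intro a b t
    have := dist_le_of_trajectories_ODE (v := fun _ => V N) (K := 20*N+20) (f := Φ a) (g := Φ b) (a := 0) (b := |t|)
      (δ := dist a b) (fun _ => V_lip N) (hc a).continuousOn (fun t _ => (hd a t).hasDerivWithinAt)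
      (hc b).continuousOn (fun t _ => (hd b t).hasDerivWithinAt) (by
        rw [h0, h0, Prod.dist_eq]; simp) |t| ⟨abs_nonneg t, le_rfl⟩
    simpa using this
  rw [continuous_iff_continuousAt]
  rintro ⟨b, u⟩
  rw [ContinuousAt, tendsto_iff_dist_tendsto_zero]
  have hle : ∀ p : ℝ × ℝ, dist (Φ p.1 |p.2|) (Φ b |u|) ≤
      dist p.1 b * exp (((20*N+20 : NNReal) : ℝ) * |p.2|) + dist (Φ b |p.2|) (Φ b |u|) := fun p =>
    (dist_triangle _ (Φ b |p.2|) _).trans (by gcongr; exact key _ _ _)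
  refine squeeze_zero (fun _ => dist_nonneg) hle ?_
  have hcb := hc b
  have : Continuous (fun p : ℝ × ℝ => dist p.1 b * exp (((20*N+20 : NNReal) : ℝ) * |p.2|) + dist (Φ b |p.2|) (Φ b |u|)) := by
    fun_prop
  have := this.tendsto (b, u)
  simpa using this

lemma sol_of (N : ℕ) (hN : 1 ≤ N) {g : ℝ → ℝ × ℝ × ℝ} {a : ℝ} (ha : hr N a < 0) (h0 : g 0 = (a, 0, -(π/2)))
    (hd : ∀ t, HasDerivAt g (V N (g t)) t) :
    Sol N a (fun t => (g t).1) (fun t => (g t).2.1) (fun t => (g t).2.2) where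
  hN := hN
  hs1 := ha
  ds t := (hd t).fst
  de t := (hd t).snd.fst
  dc t := (hd t).snd.snd
  s0 := by simp [h0]
  e0 := by simp [h0]
  c0 := by simp [h0]

theorem exists_closed (N : ℕ) (hN : 1 ≤ N) : ∃ (g : ℝ → ℝ × ℝ × ℝ) (a τ : ℝ), hr N a < 0 ∧ g 0 = (a, 0, -(π/2)) ∧
    (∀ t, HasDerivAt g (V N (g t)) t) ∧ 0 < τ ∧ Good (fun t => (g t).2.1) (fun t => (g t).2.2) τ ∧
    (g τ).2.1 = 0 ∧ (g τ).2.2 = π / 2 := by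
  obtain ⟨Φ, h0, hd⟩ := exists_flow N
  by_contra hcon
  have hno : ∀ a, hr N a < 0 → ∀ τ > 0, Good (fun t => (Φ a t).2.1) (fun t => (Φ a t).2.2) τ →
      (Φ a τ).2.1 = 0 → (Φ a τ).2.2 = π / 2 → False := fun a ha τ h1 h2 h3 h4 =>
    hcon ⟨Φ a, a, τ, ha, h0 a, hd a, h1, h2, h3, h4⟩
  have hS : ∀ a, hr N a < 0 → Sol N a (fun t => (Φ a t).1) (fun t => (Φ a t).2.1) (fun t => (Φ a t).2.2) :=
    fun a ha => sol_of N hN ha (h0 a) (hd a)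
  have hcont := flow_cont N h0 hd
  have hc1 : Continuous (fun p : ℝ × ℝ => (Φ p.1 |p.2|).2.1) := continuous_fst.comp (continuous_snd.comp hcont)
  have hc2 : Continuous (fun p : ℝ × ℝ => (Φ p.1 |p.2|).2.2) := continuous_snd.comp (continuous_snd.comp hcont)
  set U : Set ℝ := {a | ∃ t > 0, (Φ a |t|).2.1 < 0 ∧ 0 < (Φ a |t|).2.2 ∧ ∀ u ∈ Icc 0 t, (Φ a |u|).2.2 < π / 2} with hU
  set W : Set ℝ := {a | ∃ t > 0, π / 2 < (Φ a |t|).2.2 ∧ ∀ u ∈ Icc 0 t, (Φ a |u|).2.2 < 0 ∨ 0 < (Φ a |u|).2.1} with hW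
  have oU : IsOpen U := by
    rw [isOpen_iff_mem_nhds]
    rintro a ⟨t, ht, h1, h2, h3⟩
    have e1 : ∀ᶠ b in nhds a, (Φ b |t|).2.1 < 0 :=
      (hc1.comp (continuous_id.prodMk continuous_const)).continuousAt.eventually_lt continuousAt_const h1
    have e2 : ∀ᶠ b in nhds a, 0 < (Φ b |t|).2.2 :=
      continuousAt_const.eventually_lt (hc2.comp (continuous_id.prodMk continuous_const)).continuousAt h2
    have e3 : ∀ᶠ b in nhds a, ∀ u ∈ Icc 0 t, (Φ b |u|).2.2 < π / 2 :=
      isCompact_Icc.eventually_forall_of_forall_eventually fun u hu =>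
        hc2.continuousAt.eventually_lt continuousAt_const (h3 u hu)
    filter_upwards [e1, e2, e3] with b b1 b2 b3
    exact ⟨t, ht, b1, b2, b3⟩
  have oW : IsOpen W := by
    rw [isOpen_iff_mem_nhds]
    rintro a ⟨t, ht, h2, h3⟩
    have e2 : ∀ᶠ b in nhds a, π / 2 < (Φ b |t|).2.2 :=
      continuousAt_const.eventually_lt (hc2.comp (continuous_id.prodMk continuous_const)).continuousAt h2
    have e3 : ∀ᶠ b in nhds a, ∀ u ∈ Icc 0 t, (Φ b |u|).2.2 < 0 ∨ 0 < (Φ b |u|).2.1 :=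
      isCompact_Icc.eventually_forall_of_forall_eventually fun u hu => by
        rcases h3 u hu with h | h
        · exact (hc2.continuousAt.eventually_lt continuousAt_const h).mono fun _ h => Or.inl h
        · exact (continuousAt_const.eventually_lt hc1.continuousAt h).mono fun _ h => Or.inr h
    filter_upwards [e2, e3] with b b2 b3
    exact ⟨t, ht, b2, b3⟩
  have toU : ∀ a, hr N a < 0 → ∀ τ > 0, Good (fun t => (Φ a t).2.1) (fun t => (Φ a t).2.2) τ →
      (Φ a τ).2.1 = 0 → (Φ a τ).2.2 < π / 2 → a ∈ U := by
    intro a ha τ hτ hG h1 h2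
    have S := hS a ha
    have h3 : 0 < (Φ a τ).2.2 := S.E2 hτ hG h1
    obtain ⟨ε, hε, h4⟩ := pos_right (S.de τ).neg (by simp [h1]) (by
      have := sin_pos_of_pos_of_lt_pi h3 (by linarith [pi_pos])
      have := P_pos (Φ a τ).1
      have := S.C_pos τ
      simp only [neg_neg]; positivity)
    have hc : Continuous (fun t => (Φ a t).2.2) := S.cc
    have e1 := continuousAt_const.eventually_lt hc.continuousAt (g := fun t => (Φ a t).2.2) (x₀ := τ) h3
    have e2 := hc.continuousAt.eventually_lt (f := fun t => (Φ a t).2.2) (x₀ := τ) continuousAt_const h2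
    obtain ⟨δ, hδ, h5⟩ := Metric.eventually_nhds_iff.1 (e1.and e2)
    have hm : 0 < min ε δ := lt_min hε hδ
    have hmε := min_le_left ε δ
    have hmδ := min_le_right ε δ
    have hcl : ∀ u, τ ≤ u → u ≤ τ + min ε δ / 2 → 0 < (Φ a u).2.2 ∧ (Φ a u).2.2 < π / 2 := fun u hu hu' =>
      h5 (by rw [Real.dist_eq, abs_of_nonneg] <;> linarith)
    have hp : 0 < τ + min ε δ / 2 := by positivity
    refine ⟨τ + min ε δ / 2, hp, ?_, ?_, ?_⟩
    · rw [abs_of_pos hp]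
      have := h4 (τ + min ε δ / 2) ⟨by linarith, by linarith⟩
      simp only [Pi.neg_apply] at this; linarith
    · rw [abs_of_pos hp]; exact (hcl _ (by linarith) le_rfl).1
    · intro u hu
      rw [abs_of_nonneg hu.1]
      rcases lt_or_ge u τ with h | h
      · rcases hu.1.eq_or_lt with h' | h'
        · rw [← h', h0]; simp only; linarith [pi_pos]
        · exact (hG u ⟨h', h⟩).2
      · exact (hcl u h hu.2).2
  have toW : ∀ a, hr N a < 0 → ∀ τ > 0, Good (fun t => (Φ a t).2.1) (fun t => (Φ a t).2.2) τ →
      0 < (Φ a τ).2.1 → (Φ a τ).2.2 = π / 2 → a ∈ W := by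
    intro a ha τ hτ hG h1 h2
    have S := hS a ha
    have h3 := S.E1 hτ hG h2
    obtain ⟨ε, hε, h4⟩ := pos_right ((S.dc τ).sub_const (π/2)) (by simp [h2]) (by
      have := P_pos (Φ a τ).1
      have := S.C_pos τ
      simp only [h2, sin_pi_div_two, cos_pi_div_two, mul_zero, add_zero, mul_one]
      positivity)
    have hc : Continuous (fun t => (Φ a t).2.1) := S.ce
    have e1 := continuousAt_const.eventually_lt hc.continuousAt (g := fun t => (Φ a t).2.1) (x₀ := τ) h1
    obtain ⟨δ, hδ, h5⟩ := Metric.eventually_nhds_iff.1 e1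
    have hm : 0 < min ε δ := lt_min hε hδ
    have hmε := min_le_left ε δ
    have hmδ := min_le_right ε δ
    have hcl : ∀ u, τ ≤ u → u ≤ τ + min ε δ / 2 → 0 < (Φ a u).2.1 := fun u hu hu' =>
      h5 (by rw [Real.dist_eq, abs_of_nonneg] <;> linarith)
    have hp : 0 < τ + min ε δ / 2 := by positivity
    refine ⟨τ + min ε δ / 2, hp, ?_, ?_⟩
    · rw [abs_of_pos hp]
      have := h4 (τ + min ε δ / 2) ⟨by linarith, by linarith⟩
      linarith
    · intro u hu
      rw [abs_of_nonneg hu.1]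
      rcases lt_or_ge u τ with h | h
      · rcases hu.1.eq_or_lt with h' | h'
        · left; rw [← h', h0]; simp only; linarith [pi_pos]
        · exact Or.inr (hG u ⟨h', h⟩).1
      · exact Or.inr (hcl u h hu.2)
  -- boundary values at the event
  have bd : ∀ a, hr N a < 0 → ∀ τ > 0, Good (fun t => (Φ a t).2.1) (fun t => (Φ a t).2.2) τ →
      0 ≤ (Φ a τ).2.1 ∧ (Φ a τ).2.2 ≤ π / 2 := by
    intro a ha τ hτ hG
    have S := hS a ha
    exact ⟨left_ge S.ce hτ (fun t ht => (hG t ht).1.le), left_le S.cc hτ (fun t ht => (hG t ht).2.le)⟩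
  have cov : ∀ a, hr N a < 0 → ∃ τ > 0, Good (fun t => (Φ a t).2.1) (fun t => (Φ a t).2.2) τ ∧
      (((Φ a τ).2.1 = 0 ∧ (Φ a τ).2.2 < π / 2) ∨ (0 < (Φ a τ).2.1 ∧ (Φ a τ).2.2 = π / 2)) := by
    intro a ha
    obtain ⟨τ, hτ, hG, h⟩ := (hS a ha).event
    obtain ⟨b1, b2⟩ := bd a ha τ hτ hG
    refine ⟨τ, hτ, hG, ?_⟩
    rcases h with h | h
    · rcases b2.eq_or_lt with h' | h'
      · exact (hno a ha τ hτ hG h h').elim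
      · exact Or.inl ⟨h, h'⟩
    · rcases b1.eq_or_lt with h' | h'
      · exact (hno a ha τ hτ hG h'.symm h).elim
      · exact Or.inr ⟨h', h⟩
  have hX : IsPreconnected {a | hr N a < 0} := by
    apply Set.OrdConnected.isPreconnected
    refine ⟨fun a ha b hb c hc => ?_⟩
    exact (hr_anti N hc.1).trans_lt ha
  obtain ⟨a1, ha1, hA⟩ := twoA N
  obtain ⟨a2, ha2, hB⟩ := twoB N hN
  have hsub : {a | hr N a < 0} ⊆ U ∪ W := by
    intro a ha
    obtain ⟨τ, hτ, hG, h | h⟩ := cov a ha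
    · exact Or.inl (toU a ha τ hτ hG h.1 h.2)
    · exact Or.inr (toW a ha τ hτ hG h.1 h.2)
  have n1 : ({a | hr N a < 0} ∩ W).Nonempty := by
    refine ⟨a1, ha1, ?_⟩
    obtain ⟨τ, hτ, hG, h | h⟩ := cov a1 ha1
    · exact (hA _ _ _ (hS a1 ha1) τ hτ hG h.1 h.2).elim
    · exact toW a1 ha1 τ hτ hG h.1 h.2
  have n2 : ({a | hr N a < 0} ∩ U).Nonempty := by
    refine ⟨a2, ha2, ?_⟩
    obtain ⟨τ, hτ, hG, h | h⟩ := cov a2 ha2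
    · exact toU a2 ha2 τ hτ hG h.1 h.2
    · exact (hB _ _ _ (hS a2 ha2) τ hτ hG h.2).elim
  obtain ⟨a, ha, ⟨t, ht, p1, p2, p3⟩, ⟨u, hu, q1, q2⟩⟩ := hX U W oU oW hsub n2 n1
  rcases le_total t u with h | h
  · rcases q2 t ⟨ht.le, h⟩ with h' | h' <;> linarith
  · have := p3 u ⟨hu.le, h⟩
    linarith

end Shrinker

open Real Set

namespace Shrinker

lemma reparam {f : ℝ → ℝ} {p : ℝ} (hp : 0 < p) (hf : ContDiff ℝ (⊤ : ℕ∞) f) (h0 : ∀ t, 0 < f t)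
    (hper : Function.Periodic f p) :
    ∃ (q : ℝ → ℝ) (T : ℝ), 0 < T ∧ ContDiff ℝ (⊤ : ℕ∞) q ∧ (∀ t, HasDerivAt q (f (q t))⁻¹ t) ∧
      (∀ t, q (t + T) = q t + p) ∧ q 0 = 0 ∧ StrictMono q ∧ Function.Surjective q := by
  have hc := hf.continuous
  set F : ℝ → ℝ := fun t => ∫ x in (0:ℝ)..t, f x with hF
  have hi : ∀ a b, IntervalIntegrable f MeasureTheory.volume a b := fun a b => hc.intervalIntegrable a b
  have hd : ∀ t, HasDerivAt F (f t) t := fun t =>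
    intervalIntegral.integral_hasDerivAt_right (hi _ _) (hc.stronglyMeasurableAtFilter _ _) hc.continuousAt
  have hF0 : F 0 = 0 := by simp [hF]
  have hmono : StrictMono F := strictMono_of_deriv_pos fun t => by rw [(hd t).deriv]; exact h0 t
  have hFc : ContDiff ℝ (⊤ : ℕ∞) F := by
    rw [contDiff_infty_iff_deriv]
    refine ⟨fun t => (hd t).differentiableAt, ?_⟩
    have : deriv F = f := funext fun t => (hd t).deriv
    rw [this]; exact hf
  have hsurj : Function.Surjective F := hFc.continuous.surjective
    (hper.tendsto_atTop_intervalIntegral_of_pos' (hi _ _) h0 hp)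
    (hper.tendsto_atBot_intervalIntegral_of_pos' (hi _ _) h0 hp)
  have hadd : ∀ t, F (t + p) = F t + F p := by
    intro t
    have h1 := hper.intervalIntegral_add_eq t 0
    have h2 := intervalIntegral.integral_add_adjacent_intervals (hi 0 t) (hi t (t+p))
    simp only [hF]
    rw [← h2, h1, zero_add]
  set e : ℝ ≃ₜ ℝ := (StrictMono.orderIsoOfSurjective F hmono hsurj).toHomeomorph with he
  have heF : ∀ t, e t = F t := fun t => rfl
  have hr1 : ∀ t, F (e.symm t) = t := fun t => e.apply_symm_apply t
  have hr2 : ∀ t, e.symm (F t) = t := fun t => e.symm_apply_apply t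
  refine ⟨e.symm, F p, ?_, ?_, ?_, ?_, ?_, ?_, ?_⟩
  · rw [← hF0]; exact hmono hp
  · exact e.contDiff_symm_deriv (f' := f) (fun x => (h0 x).ne') hd hFc
  · intro t
    exact HasDerivAt.of_local_left_inverse e.symm.continuous.continuousAt (hd _) (h0 _).ne'
      (Filter.Eventually.of_forall hr1)
  · intro t
    rw [← hr2 (e.symm t + p), hadd, hr1]
  · have := hr2 0
    rwa [hF0] at this
  · intro a b hab
    by_contra h
    have := hmono.monotone (not_lt.1 h)
    rw [hr1, hr1] at this; linarith
  · exact e.symm.surjective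

lemma V_contDiff (N : ℕ) : ContDiff ℝ (⊤ : ℕ∞) (V N) := by
  have hP : ContDiff ℝ (⊤ : ℕ∞) P := by
    unfold P
    exact contDiff_const.div (by fun_prop) (fun s => by positivity)
  have hh : ContDiff ℝ (⊤ : ℕ∞) (hr N) := by
    unfold hr; fun_prop
  unfold V
  fun_prop

lemma sol_contDiff (N : ℕ) {g : ℝ → ℝ × ℝ × ℝ} (hd : ∀ t, HasDerivAt g (V N (g t)) t) :
    ContDiff ℝ (⊤ : ℕ∞) g := by
  have hder : deriv g = fun t => V N (g t) := funext fun t => (hd t).deriv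
  rw [contDiff_infty]
  intro n
  induction n with
  | zero => exact contDiff_zero.2 (continuous_iff_continuousAt.2 fun t => (hd t).continuousAt)
  | succ n ih =>
    push_cast
    rw [contDiff_succ_iff_deriv]
    refine ⟨fun t => (hd t).differentiableAt, fun h => ?_, ?_⟩
    · exact absurd h (by simp)
    · rw [hder]
      exact ((V_contDiff N).of_le (by exact_mod_cast le_top)).comp ih

lemma ode_unique (N : ℕ) {f g : ℝ → ℝ × ℝ × ℝ} (hf : ∀ t, HasDerivAt f (V N (f t)) t)
    (hg : ∀ t, HasDerivAt g (V N (g t)) t) (t0 : ℝ) (h : f t0 = g t0) : f = g :=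
  ODE_solution_unique_univ (v := fun _ => V N) (s := fun _ => univ) (K := 20*N+20)
    (fun _ => (V_lip N).lipschitzOnWith) (fun t => ⟨hf t, trivial⟩) (fun t => ⟨hg t, trivial⟩) h

lemma reflect (N : ℕ) {g : ℝ → ℝ × ℝ × ℝ} (hd : ∀ t, HasDerivAt g (V N (g t)) t) (b c : ℝ)
    (hc1 : cos c = -1) (hc2 : sin c = 0) :
    ∀ t, HasDerivAt (fun t => ((g (b - t)).1, -(g (b - t)).2.1, c - (g (b - t)).2.2))
      (V N ((g (b - t)).1, -(g (b - t)).2.1, c - (g (b - t)).2.2)) t := by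
  intro t
  have hb : HasDerivAt (fun t => b - t) (-1) t := by simpa using (hasDerivAt_id t).const_sub b
  have k1 : HasDerivAt (fun u => (g u).1) (V N (g (b - t))).1 (b - t) := (hd (b - t)).fst
  have k2 : HasDerivAt (fun u => (g u).2.1) (V N (g (b - t))).2.1 (b - t) := (hd (b - t)).snd.fst
  have k3 : HasDerivAt (fun u => (g u).2.2) (V N (g (b - t))).2.2 (b - t) := (hd (b - t)).snd.snd
  have h1 := HasDerivAt.comp t k1 hb
  have h2 := (HasDerivAt.comp t k2 hb).neg
  have h3 := (HasDerivAt.comp t k3 hb).const_sub c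
  have := h1.prodMk (h2.prodMk h3)
  refine HasDerivAt.congr_deriv this ?_
  simp only [V, Prod.ext_iff, cos_sub, sin_sub, hc1, hc2, mul_neg, cos_neg, sin_neg]
  refine ⟨by ring, by ring, by ring⟩

end Shrinker

open Real Set

namespace Shrinker

/-- the profile equation in polar form -/
lemma profile_alg (N : ℕ) (s η χ x y f : ℝ) (hC : 0 < cos (2 * η))
    (hx : x = exp s * cos (π / 4 + η)) (hy : y = exp s * sin (π / 4 + η)) (hx0 : 0 < x) (hy0 : 0 < y)
    (hf : f = exp s * (P s * cos (2 * η))) :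
    ((2 * N + 1) * (hr N s * P s) * (cos (2 * η) * sin χ) + 2 * N * (P s * sin (2 * η) * cos χ)
      + -(P s * cos (2 * η) * sin χ)) * f⁻¹ =
    (x * sin (π + χ + (π / 4 + η)) - cos (π + χ + (π / 4 + η)) * y) / 2
      + N * cos (π + χ + (π / 4 + η)) / y - N * sin (π + χ + (π / 4 + η)) / x := by
  have hP := P_pos s
  have hE := exp_pos s
  set θ := π / 4 + η with hθ
  have hct : 0 < cos θ := by
    rw [hx] at hx0; exact (mul_pos_iff_of_pos_left hE).1 hx0
  have hst : 0 < sin θ := by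
    rw [hy] at hy0; exact (mul_pos_iff_of_pos_left hE).1 hy0
  have h2 : 2 * η = 2 * θ - π / 2 := by rw [hθ]; ring
  have hcos : cos (2 * η) = 2 * sin θ * cos θ := by rw [h2, cos_sub_pi_div_two, sin_two_mul]
  have hsin : sin (2 * η) = 1 - 2 * cos θ ^ 2 := by
    rw [h2, sin_sub_pi_div_two, cos_two_mul]; ring
  have hsc := sin_sq_add_cos_sq θ
  have ha1 : sin (π + χ + θ) = -(sin χ * cos θ + cos χ * sin θ) := by
    rw [show π + χ + θ = (χ + θ) + π by ring, sin_add_pi, sin_add]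
  have ha2 : cos (π + χ + θ) = -(cos χ * cos θ - sin χ * sin θ) := by
    rw [show π + χ + θ = (χ + θ) + π by ring, cos_add_pi, cos_add]
  have hX : (2 * (N:ℝ) + 1) * hr N s = 2 * N + 1 - exp s ^ 2 / 2 := by
    unfold hr
    rw [show 2 * s = s + s by ring, exp_add]
    field_simp
  have e1 : (2 * N + 1) * (hr N s * P s) * (cos (2 * η) * sin χ) = (2 * N + 1 - exp s ^ 2 / 2) * P s * cos (2 * η) * sin χ := by
    rw [← hX]; ring
  rw [e1, ha1, ha2, hf, hx, hy, hcos, hsin]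
  generalize exp s = E at *
  generalize P s = p at *
  generalize sin θ = a at *
  generalize cos θ = b at *
  generalize sin χ = u at *
  generalize cos χ = v at *
  have ha : a ≠ 0 := hst.ne'
  have hb : b ≠ 0 := hct.ne'
  field_simp
  have hb2 : b ^ 2 = 1 - a ^ 2 := by linarith
  ring_nf
  simp only [hb2, show b ^ 3 = b * (1 - a^2) by rw [← hb2]; ring, show b ^ 4 = (1 - a^2)^2 by rw [← hb2]; ring]
  ring

theorem main (N : ℕ) (hN : 1 ≤ N) :
    ∃ (T : ℝ) (x y : ℝ → ℝ), 0 < T ∧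
      ContDiff ℝ (⊤ : ℕ∞) x ∧ ContDiff ℝ (⊤ : ℕ∞) y ∧
      (∀ t, x (t + T) = x t) ∧ (∀ t, y (t + T) = y t) ∧
      (∀ t, 0 < x t) ∧ (∀ t, 0 < y t) ∧
      (∀ t, (deriv x t) ^ 2 + (deriv y t) ^ 2 = 1) ∧
      Set.InjOn (fun t => (x t, y t)) (Set.Ico 0 T) ∧
      (∀ t, -(deriv (deriv x) t) * deriv y t + deriv x t * deriv (deriv y) t =
        (x t * deriv y t - deriv x t * y t) / 2
          + (N : ℝ) * deriv x t / y t - (N : ℝ) * deriv y t / x t) ∧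
      (∀ t, ∃ s, x s = y t ∧ y s = x t) := by
  obtain ⟨g, a, τ, ha, h0, hd, hτ, hG, hτ1, hτ2⟩ := exists_closed N hN
  have S := sol_of N hN ha h0 hd
  have hg := sol_contDiff N hd
  have r1 : ∀ t, g t = ((g (0 - t)).1, -(g (0 - t)).2.1, -π - (g (0 - t)).2.2) := by
    have := ode_unique N hd (reflect N hd 0 (-π) (by simp) (by simp)) 0 (by
      simp [h0]; ring)
    exact fun t => congrFun this t
  have r2 : ∀ t, g t = ((g (2 * τ - t)).1, -(g (2 * τ - t)).2.1, π - (g (2 * τ - t)).2.2) := by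
    have := ode_unique N hd (reflect N hd (2 * τ) π (by simp) (by simp)) τ (by
      rw [show 2 * τ - τ = τ by ring]
      ext
      · rfl
      · simp [hτ1]
      · simp only [hτ2]; ring)
    exact fun t => congrFun this t
  set s : ℝ → ℝ := fun t => (g t).1 with hs
  set η : ℝ → ℝ := fun t => (g t).2.1 with hη
  set χ : ℝ → ℝ := fun t => (g t).2.2 with hχ
  have cs : ContDiff ℝ (⊤ : ℕ∞) s := contDiff_fst.comp hg
  have ce : ContDiff ℝ (⊤ : ℕ∞) η := contDiff_fst.comp (contDiff_snd.comp hg)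
  have s1 : ∀ t, s (-t) = s t := fun t => by have := congrArg Prod.fst (r1 t); simp only [zero_sub] at this; exact this.symm
  have e1 : ∀ t, η (-t) = -η t := fun t => by
    have := congrArg (fun z => z.2.1) (r1 t); simp only [zero_sub] at this; simp only [hη]; linarith
  have s2 : ∀ t, s (2 * τ - t) = s t := fun t => (congrArg Prod.fst (r2 t)).symm
  have e2 : ∀ t, η (2 * τ - t) = -η t := fun t => by
    have := congrArg (fun z => z.2.1) (r2 t); simp only at this; simp only [hη]; linarith
  have sper : ∀ t, s (t + 2 * τ) = s t := fun t => by
    rw [← s1 t, ← s2 (-t)]; congr 1; ring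
  have eper : ∀ t, η (t + 2 * τ) = η t := fun t => by
    have h := e2 (-t)
    rw [e1 t, neg_neg, sub_neg_eq_add, add_comm] at h; exact h
  have hC := S.C_pos
  have hlt := S.e_lt
  have hcosθ : ∀ t, 0 < cos (π / 4 + η t) := fun t => by
    have := abs_lt.1 (hlt t)
    exact cos_pos_of_mem_Ioo ⟨by linarith [pi_pos], by linarith [pi_pos]⟩
  have hsinθ : ∀ t, 0 < sin (π / 4 + η t) := fun t => by
    have := abs_lt.1 (hlt t)
    exact sin_pos_of_pos_of_lt_pi (by linarith) (by linarith [pi_pos])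
  have hPc : ContDiff ℝ (⊤ : ℕ∞) P := by
    unfold P
    exact contDiff_const.div (by fun_prop) (fun s => by positivity)
  set f : ℝ → ℝ := fun t => exp (s t) * (P (s t) * cos (2 * η t)) with hf
  have cf : ContDiff ℝ (⊤ : ℕ∞) f := by simp only [hf]; fun_prop
  have f0 : ∀ t, 0 < f t := fun t => by
    have := hC t; have := P_pos (s t); simp only [hf]; positivity
  have fper : Function.Periodic f (2 * τ) := fun t => by simp only [hf, sper, eper]
  obtain ⟨q, T, hT, cq, dq, qper, q0, qm, qs⟩ := reparam (by positivity) cf f0 fper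
  set x0 : ℝ → ℝ := fun t => exp (s t) * cos (π / 4 + η t) with hx0
  set y0 : ℝ → ℝ := fun t => exp (s t) * sin (π / 4 + η t) with hy0
  have px : ∀ t, 0 < x0 t := fun t => mul_pos (exp_pos _) (hcosθ t)
  have py : ∀ t, 0 < y0 t := fun t => mul_pos (exp_pos _) (hsinθ t)
  set α : ℝ → ℝ := fun t => π + χ t + (π / 4 + η t) with hα
  have hsα : ∀ t, sin (α t) = -(sin (χ t) * cos (π / 4 + η t) + cos (χ t) * sin (π / 4 + η t)) := fun t => by
    simp only [hα]
    rw [show π + χ t + (π / 4 + η t) = (χ t + (π / 4 + η t)) + π by ring, sin_add_pi, sin_add]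
  have hcα : ∀ t, cos (α t) = -(cos (χ t) * cos (π / 4 + η t) - sin (χ t) * sin (π / 4 + η t)) := fun t => by
    simp only [hα]
    rw [show π + χ t + (π / 4 + η t) = (χ t + (π / 4 + η t)) + π by ring, cos_add_pi, cos_add]
  have dx0 : ∀ t, HasDerivAt x0 (f t * cos (α t)) t := fun t =>
    ((S.ds t).exp.mul ((S.de t).const_add (π/4)).cos).congr_deriv (by
      rw [hcα]; simp only [hf]; ring)
  have dy0 : ∀ t, HasDerivAt y0 (f t * sin (α t)) t := fun t =>
    ((S.ds t).exp.mul ((S.de t).const_add (π/4)).sin).congr_deriv (by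
      rw [hsα]; simp only [hf]; ring)
  have dα := fun t => ((S.dc t).const_add π).add ((S.de t).const_add (π/4))
  have dx : ∀ t, HasDerivAt (fun t => x0 (q t)) (cos (α (q t))) t := fun t =>
    ((dx0 (q t)).comp t (dq t)).congr_deriv (by have := (f0 (q t)).ne'; field_simp)
  have dy : ∀ t, HasDerivAt (fun t => y0 (q t)) (sin (α (q t))) t := fun t =>
    ((dy0 (q t)).comp t (dq t)).congr_deriv (by have := (f0 (q t)).ne'; field_simp)
  have ddx : deriv (fun t => x0 (q t)) = fun t => cos (α (q t)) := funext fun t => (dx t).deriv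
  have ddy : deriv (fun t => y0 (q t)) = fun t => sin (α (q t)) := funext fun t => (dy t).deriv
  -- injectivity
  have smono : ∀ u v, 0 ≤ u → u < v → v ≤ τ → s v < s u := fun u v hu huv hv =>
    S.s_santi huv fun t ht => S.cos_pos' hG t ⟨hu.trans_lt ht.1, ht.2.trans_le hv⟩
  have inj1 : ∀ u v, 0 ≤ u → u ≤ τ → 0 ≤ v → v ≤ τ → s u = s v → u = v := by
    intro u v a1 a2 b1 b2 h
    rcases lt_trichotomy u v with h' | h' | h'
    · have := smono u v a1 h' b2; linarith
    · exact h'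
    · have := smono v u b1 h' a2; linarith
  have eneg : ∀ u, τ < u → u < 2 * τ → η u < 0 := fun u h1 h2 => by
    have := (hG (2 * τ - u) ⟨by linarith, by linarith⟩).1
    rw [e2] at this; linarith
  have epos : ∀ u, 0 ≤ u → u ≤ τ → 0 ≤ η u := fun u h1 h2 => by
    rcases h1.eq_or_lt with h | h
    · rw [← h, S.e0]
    · rcases h2.eq_or_lt with h' | h'
      · rw [h']; exact hτ1.ge
      · exact (hG u ⟨h, h'⟩).1.le
  have inj2 : ∀ u v, 0 ≤ u → u < 2 * τ → 0 ≤ v → v < 2 * τ → s u = s v → η u = η v → u = v := by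
    intro u v a1 a2 b1 b2 h h'
    rcases le_or_gt u τ with c | c <;> rcases le_or_gt v τ with d | d
    · exact inj1 u v a1 c b1 d h
    · have := epos u a1 c; have := eneg v d b2; linarith
    · have := epos v b1 d; have := eneg u c a2; linarith
    · have := inj1 (2 * τ - u) (2 * τ - v) (by linarith) (by linarith) (by linarith) (by linarith) (by rw [s2, s2, h])
      linarith
  have qT : q T = 2 * τ := by have := qper 0; rwa [zero_add, q0, zero_add] at this
  refine ⟨T, fun t => x0 (q t), fun t => y0 (q t), hT, ?_, ?_, ?_, ?_, fun t => px _, fun t => py _, ?_, ?_, ?_, ?_⟩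
  · simp only [hx0]; fun_prop
  · simp only [hy0]; fun_prop
  · intro t; simp only [hx0, qper, sper, eper]
  · intro t; simp only [hy0, qper, sper, eper]
  · intro t; rw [ddx, ddy]; exact cos_sq_add_sin_sq _
  · intro u hu v hv huv
    obtain ⟨k1, k2⟩ := Prod.mk.inj huv
    simp only [hx0, hy0] at k1 k2
    have hE : ∀ w, (exp (s w) * cos (π / 4 + η w)) ^ 2 + (exp (s w) * sin (π / 4 + η w)) ^ 2 = exp (s w) ^ 2 := fun w => by
      linear_combination (exp (s w)) ^ 2 * cos_sq_add_sin_sq (π / 4 + η w)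
    have h1 := hE (q u)
    rw [k1, k2, hE] at h1
    have h2 : exp (s (q u)) = exp (s (q v)) :=
      ((sq_eq_sq₀ (exp_pos _).le (exp_pos _).le).1 h1).symm
    rw [h2] at k1
    have h3 := mul_left_cancel₀ (exp_pos _).ne' k1
    have l1 := abs_lt.1 (hlt (q u))
    have l2 := abs_lt.1 (hlt (q v))
    have h4 := injOn_cos ⟨by linarith, by linarith [pi_pos]⟩ ⟨by linarith, by linarith [pi_pos]⟩ h3
    apply qm.injective
    have m : ∀ w ∈ Ico 0 T, 0 ≤ q w ∧ q w < 2 * τ := fun w hw =>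
      ⟨q0 ▸ qm.monotone hw.1, qT ▸ qm hw.2⟩
    exact inj2 _ _ (m u hu).1 (m u hu).2 (m v hv).1 (m v hv).2 (exp_injective h2) (by linarith)
  · intro t
    rw [ddx, ddy]
    have dd := (dα (q t)).comp t (dq t)
    have d1 := dd.cos
    have d2 := dd.sin
    have d1' : deriv (fun t => cos (α (q t))) t = _ := d1.deriv
    have d2' : deriv (fun t => sin (α (q t))) t = _ := d2.deriv
    rw [d1', d2']
    have key := profile_alg N (s (q t)) (η (q t)) (χ (q t)) (x0 (q t)) (y0 (q t)) (f (q t)) (hC _) rfl rfl (px _) (py _) rfl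
    change _ = (x0 (q t) * sin (α (q t)) - cos (α (q t)) * y0 (q t)) / 2 + N * cos (α (q t)) / y0 (q t) - N * sin (α (q t)) / x0 (q t) at key
    rw [← key]
    have hsc := sin_sq_add_cos_sq (α (q t))
    simp only [Function.comp_apply, Pi.add_apply]
    change -(-sin (α (q t)) * _) * sin (α (q t)) + cos (α (q t)) * (cos (α (q t)) * _) = _
    linear_combination (((2 * N + 1) * (hr N (s (q t)) * P (s (q t))) * (cos (2 * η (q t)) * sin (χ (q t))) + 2 * N * (P (s (q t)) * sin (2 * η (q t)) * cos (χ (q t)))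
      + -(P (s (q t)) * cos (2 * η (q t)) * sin (χ (q t)))) * (f (q t))⁻¹) * hsc
  · intro t
    obtain ⟨u, hu⟩ := qs (-q t)
    refine ⟨u, ?_, ?_⟩
    · simp only [hx0, hy0, hu, s1, e1]
      rw [← sin_pi_div_two_sub]; congr 2; ring
    · simp only [hx0, hy0, hu, s1, e1]
      rw [← cos_pi_div_two_sub]; congr 2; ring

end Shrinker

end Aux

theorem closed_embedded_shrinker_profile_curve (n : ℕ) (hn : 2 ≤ n) :
    ∃ (T : ℝ) (x y : ℝ → ℝ), 0 < T ∧
      ContDiff ℝ (⊤ : ℕ∞) x ∧ ContDiff ℝ (⊤ : ℕ∞) y ∧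
      (∀ t, x (t + T) = x t) ∧ (∀ t, y (t + T) = y t) ∧
      (∀ t, 0 < x t) ∧ (∀ t, 0 < y t) ∧
      (∀ t, (deriv x t) ^ 2 + (deriv y t) ^ 2 = 1) ∧
      Set.InjOn (fun t => (x t, y t)) (Set.Ico 0 T) ∧
      (∀ t, -(deriv (deriv x) t) * deriv y t + deriv x t * deriv (deriv y) t =
        (x t * deriv y t - deriv x t * y t) / 2
          + ((n : ℝ) - 1) * deriv x t / y t - ((n : ℝ) - 1) * deriv y t / x t) ∧
      (∀ t, ∃ s, x s = y t ∧ y s = x t) := by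
  obtain ⟨N, rfl⟩ : ∃ N, n = N + 1 := ⟨n - 1, by omega⟩
  have h := Shrinker.main N (by omega)
  have e : (((N + 1 : ℕ) : ℝ) - 1) = N := by push_cast; ring
  rw [e]
  exact h
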